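/- arXiv:1304.0906 — 3 statements merged into one kernel-verified Lean document; each statement's English description precedes it below -/
import Mathlib

section
/- Let K be a field, t ∈ K^× and κ = (κ_1,…,κ_ℓ) ∈ Z^ℓ a multicharge. Then the following are equivalent: (i) (K,t) separates Std(P_n), that is, [n]!_t · ∏_{1≤l<m≤ℓ} ∏_{−n<d<n} [κ_l − κ_m + d]_t ≠ 0 in K; (ii) for all standard tableaux s, t ∈ Std(P_n), s = t if and only if [c_r(s)]_t = [c_r(t)]_t for all 1 ≤ r ≤ n. -/
open scoped BigOperators
open scoped Classical

namespace Paper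

/-! ## Quantum integers -/

/-- The quantum integer `[d]_x` in a field, for `d ∈ ℤ`. -/
noncomputable def qint {K : Type*} [Field K] (x : K) (d : ℤ) : K :=
  if 0 ≤ d then ∑ k ∈ Finset.range d.toNat, x ^ k
  else -∑ k ∈ Finset.range (-d).toNat, x ^ (-((k : ℤ) + 1))

/-- The quantum integer `[d]_t` in a commutative ring, for an invertible `t` and `d ∈ ℤ`. -/
def qintU {O : Type*} [CommRing O] (t : Oˣ) (d : ℤ) : O :=
  if 0 ≤ d then ∑ k ∈ Finset.range d.toNat, (t : O) ^ k
  else -∑ k ∈ Finset.range (-d).toNat, ((t ^ (-((k : ℤ) + 1)) : Oˣ) : O)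

/-! ## Nodes, multipartitions and standard tableaux -/

/-- A node `(l, r, c)`: component `l`, row `r`, column `c` (all `0`-based). -/
abbrev Node : Type := ℕ × ℕ × ℕ

/-- `nodeBelow A B` holds when `B` is strictly below `A`, i.e. `A < B` lexicographically. -/
def nodeBelow (A B : Node) : Prop :=
  A.1 < B.1 ∨ (A.1 = B.1 ∧ (A.2.1 < B.2.1 ∨ (A.2.1 = B.2.1 ∧ A.2.2 < B.2.2)))

/-- An `ℓ`-multipartition of `n`. -/
structure Multipartition (ℓ n : ℕ) : Type where
  part : ℕ → ℕ → ℕ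
  comp_bound : ∀ l, ℓ ≤ l → ∀ r, part l r = 0
  antitone : ∀ l, Antitone (part l)
  row_bound : ∀ l r, n ≤ r → part l r = 0
  size : (∑ l ∈ Finset.range ℓ, ∑ r ∈ Finset.range n, part l r) = n

/-- The diagram of a multipartition. -/
def Multipartition.diagram {ℓ n : ℕ} (μ : Multipartition ℓ n) : Set Node :=
  {A | A.2.2 < μ.part A.1 A.2.1}

/-- A standard tableau: a bijection from the diagram of its shape onto `{1, …, n}`
that increases along rows and down columns of each component (it takes the value
`0` off the diagram, so that it is determined by its entries). -/
structure StdTableau (ℓ n : ℕ) : Type where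
  shape : Multipartition ℓ n
  entry : Node → ℕ
  entry_zero : ∀ A, A ∉ shape.diagram → entry A = 0
  bijOn : Set.BijOn entry shape.diagram (Set.Icc 1 n)
  row_inc : ∀ l r c, (l, r, c + 1) ∈ shape.diagram → entry (l, r, c) < entry (l, r, c + 1)
  col_inc : ∀ l r c, (l, r + 1, c) ∈ shape.diagram → entry (l, r, c) < entry (l, r + 1, c)

/-- The node of a standard tableau containing the entry `k`. -/
noncomputable def StdTableau.node {ℓ n : ℕ} (T : StdTableau ℓ n) (k : ℕ) : Node :=
  Function.invFunOn T.entry T.shape.diagram k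

/-- The content `c_k(T) = κ_l + c - r` of the entry `k` in the tableau `T`
(`1 ≤ k ≤ n`). -/
noncomputable def content {ℓ n : ℕ} (κ : ℕ → ℤ) (T : StdTableau ℓ n) (k : ℕ) : ℤ :=
  κ (T.node k).1 + ((T.node k).2.2 : ℤ) - ((T.node k).2.1 : ℤ)

/-- The residue sequence of a standard tableau, in `I^n` with `I = ℤ/eℤ`. -/
noncomputable def resSeq {ℓ n : ℕ} (e : ℕ) (κ : ℕ → ℤ) (T : StdTableau ℓ n) :
    Fin n → ZMod e :=
  fun k => ((content κ T (k.1 + 1) : ℤ) : ZMod e)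

/-- The residue of a node. -/
def resNode (e : ℕ) (κ : ℕ → ℤ) (A : Node) : ZMod e :=
  ((κ A.1 + (A.2.2 : ℤ) - (A.2.1 : ℤ) : ℤ) : ZMod e)

/-- A set of nodes is the diagram of a multipartition (with at most `ℓ` components)
iff it is finite and downward closed in rows and columns. -/
def IsDiagramSet (ℓ : ℕ) (S : Set Node) : Prop :=
  S.Finite ∧ (∀ A ∈ S, A.1 < ℓ) ∧
    (∀ l r c, (l, r, c + 1) ∈ S → (l, r, c) ∈ S) ∧
    (∀ l r c, (l, r + 1, c) ∈ S → (l, r, c) ∈ S)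

/-- `A` is an addable node of the diagram `S`. -/
def Addable (ℓ : ℕ) (S : Set Node) (A : Node) : Prop :=
  A ∉ S ∧ IsDiagramSet ℓ (S ∪ {A})

/-- `A` is a removable node of the diagram `S`. -/
def Removable (ℓ : ℕ) (S : Set Node) (A : Node) : Prop :=
  A ∈ S ∧ IsDiagramSet ℓ (S \ {A})

/-- `d_A(S)`: the number of addable nodes of `S` of the same residue as `A` strictly
below `A`, minus the number of removable ones. -/
noncomputable def dNode (ℓ e : ℕ) (κ : ℕ → ℤ) (S : Set Node) (A : Node) : ℤ :=
  (Set.ncard {B | Addable ℓ S B ∧ resNode e κ B = resNode e κ A ∧ nodeBelow A B} : ℤ) -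
    (Set.ncard {B | Removable ℓ S B ∧ resNode e κ B = resNode e κ A ∧ nodeBelow A B} : ℤ)

/-- The Brundan–Kleshchev–Wang degree `deg_e(T)` of a standard tableau, written as the
telescoping sum of the recursion `deg_e(T) = deg_e(T↓(n-1)) + d_A(Shape(T))`. -/
noncomputable def degE {ℓ n : ℕ} (e : ℕ) (κ : ℕ → ℤ) (T : StdTableau ℓ n) : ℤ :=
  ∑ m ∈ Finset.Icc 1 n,
    dNode ℓ e κ {A | A ∈ T.shape.diagram ∧ T.entry A ≤ m} (T.node m)

/-- The restriction of the diagram of `T` to entries `≤ m` (the diagram of `Shape(T↓m)`). -/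
def restDiag {ℓ n : ℕ} (T : StdTableau ℓ n) (m : ℕ) : Set Node :=
  {A | A ∈ T.shape.diagram ∧ T.entry A ≤ m}

/-- Dominance order on standard tableaux: `domTab S T` iff `S ⊵ T`. -/
def domTab {ℓ n : ℕ} (S T : StdTableau ℓ n) : Prop :=
  ∀ m l i : ℕ,
    Set.ncard {A | A ∈ restDiag T m ∧ (A.1 < l ∨ (A.1 = l ∧ A.2.1 ≤ i))} ≤
      Set.ncard {A | A ∈ restDiag S m ∧ (A.1 < l ∨ (A.1 = l ∧ A.2.1 ≤ i))}

/-- Interchange the entries `r` and `r + 1` in an entry function. -/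
def swapEntry (f : Node → ℕ) (r : ℕ) : Node → ℕ :=
  fun A => if f A = r then r + 1 else if f A = r + 1 then r else f A

/-- `ρ_r(T) = c_r(T) - c_{r+1}(T)`, the axial distance. -/
noncomputable def rhoTab {ℓ n : ℕ} (κ : ℕ → ℤ) (T : StdTableau ℓ n) (r : ℕ) : ℤ :=
  content κ T r - content κ T (r + 1)

/-- The entry function of the row-reading initial tableau `t^λ`. -/
noncomputable def tlamEntry {ℓ n : ℕ} (μ : Multipartition ℓ n) (A : Node) : ℕ :=
  if A ∈ μ.diagram then
    (∑ l ∈ Finset.range A.1, ∑ r ∈ Finset.range n, μ.part l r) +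
      (∑ r ∈ Finset.range A.2.1, μ.part A.1 r) + A.2.2 + 1
  else 0

/-- The finite set of possible contents of standard tableaux of size `n`. -/
noncomputable def contFinset (ℓ n : ℕ) (κ : ℕ → ℤ) : Finset ℤ :=
  ((Finset.range ℓ ×ˢ Finset.range n ×ˢ Finset.range n).image
      (fun x => κ x.1 + (x.2.2 : ℤ) - (x.2.1 : ℤ))).filter
    (fun c => ∃ T : StdTableau ℓ n, ∃ k, 1 ≤ k ∧ k ≤ n ∧ content κ T k = c)

/-- The standard tableau (if any) obtained from `T` by interchanging the entries
`r` and `r + 1`; i.e. `T·s_r` if it is standard, and `none` otherwise. -/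
noncomputable def oSwapO {ℓ n : ℕ} (T : StdTableau ℓ n) (r : ℕ) :
    Option (StdTableau ℓ n) :=
  if h : ∃ V : StdTableau ℓ n, V.entry = swapEntry T.entry r then some (Classical.choose h)
  else none

/-- `oSwap` extended to `Option`. -/
noncomputable def oSwap {ℓ n : ℕ} (X : Option (StdTableau ℓ n)) (r : ℕ) :
    Option (StdTableau ℓ n) :=
  X.bind fun T => oSwapO T r

/-- Evaluate a seminormal coefficient system on an optional tableau (by `0` if none). -/
noncomputable def aE {ℓ n : ℕ} {K : Type*} [Field K] (α : ℕ → StdTableau ℓ n → K) (r : ℕ)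
    (X : Option (StdTableau ℓ n)) : K :=
  X.elim 0 (α r)

/-! ## Separation and idempotent subrings -/

/-- `(K, t)` separates `Std(P_n)` (field version):
`[n]!_t ∏_{1 ≤ l < m ≤ ℓ} ∏_{-n < d < n} [κ_l - κ_m + d]_t ≠ 0`. -/
def SeparatesF {K : Type*} [Field K] (t : Kˣ) (n ℓ : ℕ) (κ : ℕ → ℤ) : Prop :=
  ((∏ d ∈ Finset.Icc 1 n, qint (t : K) (d : ℤ)) *
      ∏ l ∈ Finset.range ℓ, ∏ m ∈ Finset.Ioo l ℓ,
        ∏ d ∈ Finset.Ioo (-(n : ℤ)) (n : ℤ), qint (t : K) (κ l - κ m + d)) ≠ 0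

/-- `(O, t)` separates `Std(P_n)` (subring version): the separation element is a unit. -/
def SeparatesU {O : Type*} [CommRing O] (t : Oˣ) (n ℓ : ℕ) (κ : ℕ → ℤ) : Prop :=
  IsUnit ((∏ d ∈ Finset.Icc 1 n, qintU t (d : ℤ)) *
      ∏ l ∈ Finset.range ℓ, ∏ m ∈ Finset.Ioo l ℓ,
        ∏ d ∈ Finset.Ioo (-(n : ℤ)) (n : ℤ), qintU t (κ l - κ m + d))

/-- `(O, t)` is an `e`-idempotent subring of the field `K`. -/
def IsIdempotentSubring {K : Type*} [Field K] (O : Subring K) (t : Oˣ) (e n ℓ : ℕ)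
    (κ : ℕ → ℤ) : Prop :=
  SeparatesU t n ℓ κ ∧
    (∀ k : ℤ, ¬(e : ℤ) ∣ k → IsUnit (qintU t k)) ∧
    (∀ k : ℤ, (e : ℤ) ∣ k → qintU t k ∈ Ideal.jacobson (⊥ : Ideal O))

/-! ## The cyclotomic Hecke algebra, by generators and relations -/

/-- Generators `L_1, …, L_n`, `T_1, …, T_{n-1}` (here `0`-based). -/
inductive HeckeGen (n : ℕ) : Type
  | L : Fin n → HeckeGen n
  | T : Fin (n - 1) → HeckeGen n

/-- The position `r` of the pair `(r, r+1)` interchanged by the `r`-th transposition. -/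
def pL {n : ℕ} (r : Fin (n - 1)) : Fin n := ⟨r.1, by have := r.2; omega⟩

/-- The position `r + 1` of the pair interchanged by the `r`-th transposition. -/
def pR {n : ℕ} (r : Fin (n - 1)) : Fin n := ⟨r.1 + 1, by have := r.2; omega⟩

/-- The position `r + 2`, used in braid relations. -/
def pM {n : ℕ} (r : Fin (n - 1)) (hr : r.1 + 1 < n - 1) : Fin n := ⟨r.1 + 2, by omega⟩

/-- The free algebra generator `L_k`. -/
def hL (R : Type*) [CommRing R] {n : ℕ} (k : Fin n) : FreeAlgebra R (HeckeGen n) :=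
  FreeAlgebra.ι R (HeckeGen.L k)

/-- The free algebra generator `T_r`. -/
def hT (R : Type*) [CommRing R] {n : ℕ} (r : Fin (n - 1)) : FreeAlgebra R (HeckeGen n) :=
  FreeAlgebra.ι R (HeckeGen.T r)

/-- The defining relations of the integral cyclotomic Hecke algebra `H_n(R, t, κ)`. -/
inductive HeckeRel (R : Type*) [CommRing R] (t : Rˣ) (n ℓ : ℕ) (κ : ℕ → ℤ) :
    FreeAlgebra R (HeckeGen n) → FreeAlgebra R (HeckeGen n) → Prop
  | cyc (h : 0 < n) :
      HeckeRel R t n ℓ κ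
        (((List.range ℓ).map fun l =>
          hL R (⟨0, h⟩ : Fin n) - algebraMap R _ (qintU t (κ l))).prod) 0
  | quad (r : Fin (n - 1)) :
      HeckeRel R t n ℓ κ ((hT R r + 1) * (hT R r - algebraMap R _ (t : R))) 0
  | LL (k m : Fin n) : HeckeRel R t n ℓ κ (hL R k * hL R m) (hL R m * hL R k)
  | TTfar (r s : Fin (n - 1)) (h : r.1 + 1 < s.1 ∨ s.1 + 1 < r.1) :
      HeckeRel R t n ℓ κ (hT R r * hT R s) (hT R s * hT R r)
  | braid (r s : Fin (n - 1)) (h : s.1 = r.1 + 1) :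
      HeckeRel R t n ℓ κ (hT R r * hT R s * hT R r) (hT R s * hT R r * hT R s)
  | TL (r : Fin (n - 1)) (k : Fin n) (h : k.1 ≠ r.1 ∧ k.1 ≠ r.1 + 1) :
      HeckeRel R t n ℓ κ (hT R r * hL R k) (hL R k * hT R r)
  | LT (r : Fin (n - 1)) :
      HeckeRel R t n ℓ κ (hL R (pR r) * (hT R r - algebraMap R _ (t : R) + 1))
        (hT R r * hL R (pL r) + 1)

/-- The integral cyclotomic Hecke algebra of type `A`, `H_n(R, t, κ)`. -/
noncomputable abbrev CycHecke (R : Type*) [CommRing R] (t : Rˣ) (n ℓ : ℕ) (κ : ℕ → ℤ) :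
    Type _ :=
  RingQuot (HeckeRel R t n ℓ κ)

/-- The generator `L_k` of the cyclotomic Hecke algebra. -/
noncomputable def Lgen (R : Type*) [CommRing R] (t : Rˣ) (n ℓ : ℕ) (κ : ℕ → ℤ)
    (k : Fin n) : CycHecke R t n ℓ κ :=
  RingQuot.mkAlgHom R (HeckeRel R t n ℓ κ) (hL R k)

/-- The generator `T_r` of the cyclotomic Hecke algebra. -/
noncomputable def Tgen (R : Type*) [CommRing R] (t : Rˣ) (n ℓ : ℕ) (κ : ℕ → ℤ)
    (r : Fin (n - 1)) : CycHecke R t n ℓ κ :=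
  RingQuot.mkAlgHom R (HeckeRel R t n ℓ κ) (hT R r)

end Paper
/-! ## Quiver Hecke (KLR) algebras, by generators and relations -/

namespace Paper

/-- Generators `e(i)` (`i ∈ I^n`), `ψ_1, …, ψ_{n-1}`, `y_1, …, y_n` (here `0`-based). -/
inductive KLRGen (n e : ℕ) : Type
  | idem : (Fin n → ZMod e) → KLRGen n e
  | psi : Fin (n - 1) → KLRGen n e
  | y : Fin n → KLRGen n e

/-- The free algebra generator `e(i)`. -/
def kE (R : Type*) [CommRing R] {n e : ℕ} (i : Fin n → ZMod e) :
    FreeAlgebra R (KLRGen n e) :=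
  FreeAlgebra.ι R (KLRGen.idem i)

/-- The free algebra generator `ψ_r`. -/
def kPsi (R : Type*) [CommRing R] {n e : ℕ} (r : Fin (n - 1)) :
    FreeAlgebra R (KLRGen n e) :=
  FreeAlgebra.ι R (KLRGen.psi r)

/-- The free algebra generator `y_k`. -/
def kY (R : Type*) [CommRing R] {n e : ℕ} (k : Fin n) : FreeAlgebra R (KLRGen n e) :=
  FreeAlgebra.ι R (KLRGen.y k)

/-- `s_r · i`: interchange the entries of `i` at positions `r` and `r + 1`. -/
def swapSeq {n e : ℕ} (i : Fin n → ZMod e) (r : Fin (n - 1)) : Fin n → ZMod e :=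
  fun k => if k = pL r then i (pR r) else if k = pR r then i (pL r) else i k

/-- The defining relations of the cyclotomic quiver Hecke algebra `R_n^Λ(R)` where
`Λ = Σ_l Λ_{κ_l mod e}`. -/
inductive KLRRel (R : Type*) [CommRing R] (n e ℓ : ℕ) [NeZero e] (κ : ℕ → ℤ) :
    FreeAlgebra R (KLRGen n e) → FreeAlgebra R (KLRGen n e) → Prop
  | cyc (h : 0 < n) (i : Fin n → ZMod e) :
      KLRRel R n e ℓ κ
        ((kY R (⟨0, h⟩ : Fin n)) ^
            (((Finset.range ℓ).filter fun l => ((κ l : ZMod e) = i ⟨0, h⟩)).card) *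
          kE R i) 0
  | orth (i j : Fin n → ZMod e) (h : i ≠ j) : KLRRel R n e ℓ κ (kE R i * kE R j) 0
  | idem (i : Fin n → ZMod e) : KLRRel R n e ℓ κ (kE R i * kE R i) (kE R i)
  | complete : KLRRel R n e ℓ κ (∑ i : Fin n → ZMod e, kE R i) 1
  | yE (k : Fin n) (i : Fin n → ZMod e) :
      KLRRel R n e ℓ κ (kY R k * kE R i) (kE R i * kY R k)
  | psiE (r : Fin (n - 1)) (i : Fin n → ZMod e) :
      KLRRel R n e ℓ κ (kPsi R r * kE R i) (kE R (swapSeq i r) * kPsi R r)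
  | yy (k m : Fin n) : KLRRel R n e ℓ κ (kY R k * kY R m) (kY R m * kY R k)
  | psiyEq (r : Fin (n - 1)) (i : Fin n → ZMod e) (h : i (pL r) = i (pR r)) :
      KLRRel R n e ℓ κ (kPsi R r * kY R (pR r) * kE R i)
        ((kY R (pL r) * kPsi R r + 1) * kE R i)
  | psiyNe (r : Fin (n - 1)) (i : Fin n → ZMod e) (h : i (pL r) ≠ i (pR r)) :
      KLRRel R n e ℓ κ (kPsi R r * kY R (pR r) * kE R i)
        (kY R (pL r) * kPsi R r * kE R i)
  | ypsiEq (r : Fin (n - 1)) (i : Fin n → ZMod e) (h : i (pL r) = i (pR r)) :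
      KLRRel R n e ℓ κ (kY R (pR r) * kPsi R r * kE R i)
        ((kPsi R r * kY R (pL r) + 1) * kE R i)
  | ypsiNe (r : Fin (n - 1)) (i : Fin n → ZMod e) (h : i (pL r) ≠ i (pR r)) :
      KLRRel R n e ℓ κ (kY R (pR r) * kPsi R r * kE R i)
        (kPsi R r * kY R (pL r) * kE R i)
  | psiyFar (r : Fin (n - 1)) (k : Fin n) (h : k.1 ≠ r.1 ∧ k.1 ≠ r.1 + 1) :
      KLRRel R n e ℓ κ (kPsi R r * kY R k) (kY R k * kPsi R r)
  | psipsiFar (r s : Fin (n - 1)) (h : r.1 + 1 < s.1 ∨ s.1 + 1 < r.1) :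
      KLRRel R n e ℓ κ (kPsi R r * kPsi R s) (kPsi R s * kPsi R r)
  | quadEq (r : Fin (n - 1)) (i : Fin n → ZMod e) (h : i (pL r) = i (pR r)) :
      KLRRel R n e ℓ κ (kPsi R r ^ 2 * kE R i) 0
  | quadR (r : Fin (n - 1)) (i : Fin n → ZMod e)
      (h1 : i (pR r) = i (pL r) + 1) (h2 : i (pL r) ≠ i (pR r) + 1) :
      KLRRel R n e ℓ κ (kPsi R r ^ 2 * kE R i) ((kY R (pL r) - kY R (pR r)) * kE R i)
  | quadL (r : Fin (n - 1)) (i : Fin n → ZMod e)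
      (h1 : i (pL r) = i (pR r) + 1) (h2 : i (pR r) ≠ i (pL r) + 1) :
      KLRRel R n e ℓ κ (kPsi R r ^ 2 * kE R i) ((kY R (pR r) - kY R (pL r)) * kE R i)
  | quadBoth (r : Fin (n - 1)) (i : Fin n → ZMod e)
      (h1 : i (pR r) = i (pL r) + 1) (h2 : i (pL r) = i (pR r) + 1) :
      KLRRel R n e ℓ κ (kPsi R r ^ 2 * kE R i)
        ((kY R (pR r) - kY R (pL r)) * (kY R (pL r) - kY R (pR r)) * kE R i)
  | quadNone (r : Fin (n - 1)) (i : Fin n → ZMod e) (h1 : i (pL r) ≠ i (pR r))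
      (h2 : i (pR r) ≠ i (pL r) + 1) (h3 : i (pL r) ≠ i (pR r) + 1) :
      KLRRel R n e ℓ κ (kPsi R r ^ 2 * kE R i) (kE R i)
  | braidR (r : Fin (n - 1)) (hr : r.1 + 1 < n - 1) (i : Fin n → ZMod e)
      (h0 : i (pM r hr) = i (pL r)) (h1 : i (pR r) = i (pL r) + 1)
      (h2 : i (pL r) ≠ i (pR r) + 1) :
      KLRRel R n e ℓ κ (kPsi R r * kPsi R ⟨r.1 + 1, hr⟩ * kPsi R r * kE R i)
        ((kPsi R ⟨r.1 + 1, hr⟩ * kPsi R r * kPsi R ⟨r.1 + 1, hr⟩ - 1) * kE R i)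
  | braidL (r : Fin (n - 1)) (hr : r.1 + 1 < n - 1) (i : Fin n → ZMod e)
      (h0 : i (pM r hr) = i (pL r)) (h1 : i (pL r) = i (pR r) + 1)
      (h2 : i (pR r) ≠ i (pL r) + 1) :
      KLRRel R n e ℓ κ (kPsi R r * kPsi R ⟨r.1 + 1, hr⟩ * kPsi R r * kE R i)
        ((kPsi R ⟨r.1 + 1, hr⟩ * kPsi R r * kPsi R ⟨r.1 + 1, hr⟩ + 1) * kE R i)
  | braidBoth (r : Fin (n - 1)) (hr : r.1 + 1 < n - 1) (i : Fin n → ZMod e)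
      (h0 : i (pM r hr) = i (pL r)) (h1 : i (pR r) = i (pL r) + 1)
      (h2 : i (pL r) = i (pR r) + 1) :
      KLRRel R n e ℓ κ (kPsi R r * kPsi R ⟨r.1 + 1, hr⟩ * kPsi R r * kE R i)
        ((kPsi R ⟨r.1 + 1, hr⟩ * kPsi R r * kPsi R ⟨r.1 + 1, hr⟩ +
            kY R (pL r) - 2 * kY R (pR r) + kY R (pM r hr)) * kE R i)
  | braidNone (r : Fin (n - 1)) (hr : r.1 + 1 < n - 1) (i : Fin n → ZMod e)
      (h : ¬(i (pM r hr) = i (pL r) ∧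
        (i (pR r) = i (pL r) + 1 ∨ i (pL r) = i (pR r) + 1))) :
      KLRRel R n e ℓ κ (kPsi R r * kPsi R ⟨r.1 + 1, hr⟩ * kPsi R r * kE R i)
        (kPsi R ⟨r.1 + 1, hr⟩ * kPsi R r * kPsi R ⟨r.1 + 1, hr⟩ * kE R i)

/-- The cyclotomic quiver Hecke algebra `R_n^Λ(R)`, `Λ = Σ_l Λ_{κ_l mod e}`. -/
noncomputable abbrev KLR (R : Type*) [CommRing R] (n e ℓ : ℕ) [NeZero e] (κ : ℕ → ℤ) :
    Type _ :=
  RingQuot (KLRRel R n e ℓ κ)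

/-- The generator `e(i)` of the cyclotomic quiver Hecke algebra. -/
noncomputable def KeGen (R : Type*) [CommRing R] (n e ℓ : ℕ) [NeZero e] (κ : ℕ → ℤ)
    (i : Fin n → ZMod e) : KLR R n e ℓ κ :=
  RingQuot.mkAlgHom R (KLRRel R n e ℓ κ) (kE R i)

/-- The generator `ψ_r` of the cyclotomic quiver Hecke algebra. -/
noncomputable def KpsiGen (R : Type*) [CommRing R] (n e ℓ : ℕ) [NeZero e] (κ : ℕ → ℤ)
    (r : Fin (n - 1)) : KLR R n e ℓ κ :=
  RingQuot.mkAlgHom R (KLRRel R n e ℓ κ) (kPsi R r)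

/-- The generator `y_k` of the cyclotomic quiver Hecke algebra. -/
noncomputable def KyGen (R : Type*) [CommRing R] (n e ℓ : ℕ) [NeZero e] (κ : ℕ → ℤ)
    (k : Fin n) : KLR R n e ℓ κ :=
  RingQuot.mkAlgHom R (KLRRel R n e ℓ κ) (kY R k)

end Paper
/-! ## The deformed cyclotomic quiver Hecke algebra -/

namespace Paper

/-- `y_k^⟨d⟩ = t^d y_k + [d]_t` in the free algebra. -/
def ydot (R : Type*) [CommRing R] (t : Rˣ) {n e : ℕ} (d : ℤ) (k : Fin n) :
    FreeAlgebra R (KLRGen n e) :=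
  algebraMap R _ ((t ^ d : Rˣ) : R) * kY R k + algebraMap R _ (qintU t d)

/-- `ρ_r(i) = î_r - î_{r+1}` for `i ∈ I^n`. -/
def rhoI {n e : ℕ} (i : Fin n → ZMod e) (r : Fin (n - 1)) : ℤ :=
  ((i (pL r)).val : ℤ) - ((i (pR r)).val : ℤ)

/-- The defining relations of the deformed cyclotomic quiver Hecke algebra `R_n(O)`. -/
inductive DefKLRRel (R : Type*) [CommRing R] (t : Rˣ) (n e ℓ : ℕ) [NeZero e] (κ : ℕ → ℤ) :
    FreeAlgebra R (KLRGen n e) → FreeAlgebra R (KLRGen n e) → Prop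
  | cyc (h : 0 < n) (i : Fin n → ZMod e) :
      DefKLRRel R t n e ℓ κ
        ((((List.range ℓ).map fun l =>
            if ((κ l : ZMod e) = i ⟨0, h⟩) then
              kY R (⟨0, h⟩ : Fin n) -
                algebraMap R _ (qintU t (κ l - ((i ⟨0, h⟩).val : ℤ)))
            else 1).prod) * kE R i) 0
  | orth (i j : Fin n → ZMod e) (h : i ≠ j) : DefKLRRel R t n e ℓ κ (kE R i * kE R j) 0
  | idem (i : Fin n → ZMod e) : DefKLRRel R t n e ℓ κ (kE R i * kE R i) (kE R i)
  | complete : DefKLRRel R t n e ℓ κ (∑ i : Fin n → ZMod e, kE R i) 1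
  | yE (k : Fin n) (i : Fin n → ZMod e) :
      DefKLRRel R t n e ℓ κ (kY R k * kE R i) (kE R i * kY R k)
  | psiE (r : Fin (n - 1)) (i : Fin n → ZMod e) :
      DefKLRRel R t n e ℓ κ (kPsi R r * kE R i) (kE R (swapSeq i r) * kPsi R r)
  | yy (k m : Fin n) : DefKLRRel R t n e ℓ κ (kY R k * kY R m) (kY R m * kY R k)
  | psiyEq (r : Fin (n - 1)) (i : Fin n → ZMod e) (h : i (pL r) = i (pR r)) :
      DefKLRRel R t n e ℓ κ (kPsi R r * kY R (pR r) * kE R i)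
        ((kY R (pL r) * kPsi R r + 1) * kE R i)
  | psiyNe (r : Fin (n - 1)) (i : Fin n → ZMod e) (h : i (pL r) ≠ i (pR r)) :
      DefKLRRel R t n e ℓ κ (kPsi R r * kY R (pR r) * kE R i)
        (kY R (pL r) * kPsi R r * kE R i)
  | ypsiEq (r : Fin (n - 1)) (i : Fin n → ZMod e) (h : i (pL r) = i (pR r)) :
      DefKLRRel R t n e ℓ κ (kY R (pR r) * kPsi R r * kE R i)
        ((kPsi R r * kY R (pL r) + 1) * kE R i)
  | ypsiNe (r : Fin (n - 1)) (i : Fin n → ZMod e) (h : i (pL r) ≠ i (pR r)) :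
      DefKLRRel R t n e ℓ κ (kY R (pR r) * kPsi R r * kE R i)
        (kPsi R r * kY R (pL r) * kE R i)
  | psiyFar (r : Fin (n - 1)) (k : Fin n) (h : k.1 ≠ r.1 ∧ k.1 ≠ r.1 + 1) :
      DefKLRRel R t n e ℓ κ (kPsi R r * kY R k) (kY R k * kPsi R r)
  | psipsiFar (r s : Fin (n - 1)) (h : r.1 + 1 < s.1 ∨ s.1 + 1 < r.1) :
      DefKLRRel R t n e ℓ κ (kPsi R r * kPsi R s) (kPsi R s * kPsi R r)
  | quadEq (r : Fin (n - 1)) (i : Fin n → ZMod e) (h : i (pL r) = i (pR r)) :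
      DefKLRRel R t n e ℓ κ (kPsi R r ^ 2 * kE R i) 0
  | quadR (r : Fin (n - 1)) (i : Fin n → ZMod e)
      (h1 : i (pR r) = i (pL r) + 1) (h2 : i (pL r) ≠ i (pR r) + 1) :
      DefKLRRel R t n e ℓ κ (kPsi R r ^ 2 * kE R i)
        ((ydot R t (1 + rhoI i r) (pL r) - kY R (pR r)) * kE R i)
  | quadL (r : Fin (n - 1)) (i : Fin n → ZMod e)
      (h1 : i (pL r) = i (pR r) + 1) (h2 : i (pR r) ≠ i (pL r) + 1) :
      DefKLRRel R t n e ℓ κ (kPsi R r ^ 2 * kE R i)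
        ((ydot R t (1 - rhoI i r) (pR r) - kY R (pL r)) * kE R i)
  | quadBoth (r : Fin (n - 1)) (i : Fin n → ZMod e)
      (h1 : i (pR r) = i (pL r) + 1) (h2 : i (pL r) = i (pR r) + 1) :
      DefKLRRel R t n e ℓ κ (kPsi R r ^ 2 * kE R i)
        ((ydot R t (1 + rhoI i r) (pL r) - kY R (pR r)) *
          (ydot R t (1 - rhoI i r) (pR r) - kY R (pL r)) * kE R i)
  | quadNone (r : Fin (n - 1)) (i : Fin n → ZMod e) (h1 : i (pL r) ≠ i (pR r))
      (h2 : i (pR r) ≠ i (pL r) + 1) (h3 : i (pL r) ≠ i (pR r) + 1) :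
      DefKLRRel R t n e ℓ κ (kPsi R r ^ 2 * kE R i) (kE R i)
  | braidBoth (r : Fin (n - 1)) (hr : r.1 + 1 < n - 1) (i : Fin n → ZMod e)
      (h0 : i (pM r hr) = i (pL r)) (h1 : i (pR r) = i (pL r) + 1)
      (h2 : i (pL r) = i (pR r) + 1) :
      DefKLRRel R t n e ℓ κ
        ((kPsi R r * kPsi R ⟨r.1 + 1, hr⟩ * kPsi R r -
            kPsi R ⟨r.1 + 1, hr⟩ * kPsi R r * kPsi R ⟨r.1 + 1, hr⟩) * kE R i)
        ((ydot R t (1 + rhoI i r) (pL r) + ydot R t (1 + rhoI i r) (pM r hr) -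
            ydot R t (1 + rhoI i r) (pR r) - ydot R t (1 - rhoI i r) (pR r)) * kE R i)
  | braidR (r : Fin (n - 1)) (hr : r.1 + 1 < n - 1) (i : Fin n → ZMod e)
      (h0 : i (pM r hr) = i (pL r)) (h1 : i (pR r) = i (pL r) + 1)
      (h2 : i (pL r) ≠ i (pR r) + 1) :
      DefKLRRel R t n e ℓ κ
        ((kPsi R r * kPsi R ⟨r.1 + 1, hr⟩ * kPsi R r -
            kPsi R ⟨r.1 + 1, hr⟩ * kPsi R r * kPsi R ⟨r.1 + 1, hr⟩) * kE R i)
        (algebraMap R _ (-(((t ^ (1 + rhoI i r) : Rˣ) : R))) * kE R i)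
  | braidL (r : Fin (n - 1)) (hr : r.1 + 1 < n - 1) (i : Fin n → ZMod e)
      (h0 : i (pM r hr) = i (pL r)) (h1 : i (pL r) = i (pR r) + 1)
      (h2 : i (pR r) ≠ i (pL r) + 1) :
      DefKLRRel R t n e ℓ κ
        ((kPsi R r * kPsi R ⟨r.1 + 1, hr⟩ * kPsi R r -
            kPsi R ⟨r.1 + 1, hr⟩ * kPsi R r * kPsi R ⟨r.1 + 1, hr⟩) * kE R i)
        (kE R i)
  | braidNone (r : Fin (n - 1)) (hr : r.1 + 1 < n - 1) (i : Fin n → ZMod e)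
      (h : ¬(i (pM r hr) = i (pL r) ∧
        (i (pR r) = i (pL r) + 1 ∨ i (pL r) = i (pR r) + 1))) :
      DefKLRRel R t n e ℓ κ
        ((kPsi R r * kPsi R ⟨r.1 + 1, hr⟩ * kPsi R r -
            kPsi R ⟨r.1 + 1, hr⟩ * kPsi R r * kPsi R ⟨r.1 + 1, hr⟩) * kE R i) 0

/-- The deformed cyclotomic quiver Hecke algebra `R_n(R)`. -/
noncomputable abbrev DefKLR (R : Type*) [CommRing R] (t : Rˣ) (n e ℓ : ℕ) [NeZero e]
    (κ : ℕ → ℤ) : Type _ :=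
  RingQuot (DefKLRRel R t n e ℓ κ)

/-- The generator `f_i` of the deformed cyclotomic quiver Hecke algebra. -/
noncomputable def DfGen (R : Type*) [CommRing R] (t : Rˣ) (n e ℓ : ℕ) [NeZero e]
    (κ : ℕ → ℤ) (i : Fin n → ZMod e) : DefKLR R t n e ℓ κ :=
  RingQuot.mkAlgHom R (DefKLRRel R t n e ℓ κ) (kE R i)

/-- The generator `ψ_r` of the deformed cyclotomic quiver Hecke algebra. -/
noncomputable def DpsiGen (R : Type*) [CommRing R] (t : Rˣ) (n e ℓ : ℕ) [NeZero e]
    (κ : ℕ → ℤ) (r : Fin (n - 1)) : DefKLR R t n e ℓ κ :=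
  RingQuot.mkAlgHom R (DefKLRRel R t n e ℓ κ) (kPsi R r)

/-- The generator `y_k` of the deformed cyclotomic quiver Hecke algebra. -/
noncomputable def DyGen (R : Type*) [CommRing R] (t : Rˣ) (n e ℓ : ℕ) [NeZero e]
    (κ : ℕ → ℤ) (k : Fin n) : DefKLR R t n e ℓ κ :=
  RingQuot.mkAlgHom R (DefKLRRel R t n e ℓ κ) (kY R k)

/-! ## Seminormal idempotents -/

/-- The seminormal idempotent `F_T` of the semisimple cyclotomic Hecke algebra:
`F_T = ∏_{k=1}^n ∏_{c ∈ Cont(n), [c_k(T)] ≠ [c]} (L_k - [c]) / ([c_k(T)] - [c])`. -/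
noncomputable def Fidem (K : Type*) [Field K] (tK : Kˣ) (n ℓ : ℕ) (κ : ℕ → ℤ)
    (T : StdTableau ℓ n) : CycHecke K tK n ℓ κ :=
  ((List.finRange n).map (fun k =>
    (((contFinset ℓ n κ).sort (· ≤ ·)).map (fun c =>
      if qint (tK : K) (content κ T (k.1 + 1)) ≠ qint (tK : K) c then
        (Lgen K tK n ℓ κ k - algebraMap K _ (qint (tK : K) c)) *
          algebraMap K _ ((qint (tK : K) (content κ T (k.1 + 1)) - qint (tK : K) c)⁻¹)
      else 1)).prod)).prod

/-- The residue idempotent `f_i = Σ_{T ∈ Std(i)} F_T`. -/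
noncomputable def fres (K : Type*) [Field K] (tK : Kˣ) (n ℓ e : ℕ) (κ : ℕ → ℤ)
    (i : Fin n → ZMod e) : CycHecke K tK n ℓ κ :=
  ∑ᶠ T : {T : StdTableau ℓ n // resSeq e κ T = i}, Fidem K tK n ℓ κ T.1

/-- The simultaneous two-sided eigenspace `H_{S,T}` of the Jucys–Murphy elements. -/
noncomputable def eigSub (K : Type*) [Field K] (tK : Kˣ) (n ℓ : ℕ) (κ : ℕ → ℤ)
    (S T : StdTableau ℓ n) : Submodule K (CycHecke K tK n ℓ κ) where
  carrier := {h | ∀ k : Fin n,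
      Lgen K tK n ℓ κ k * h = qint (tK : K) (content κ S (k.1 + 1)) • h ∧
      h * Lgen K tK n ℓ κ k = qint (tK : K) (content κ T (k.1 + 1)) • h}
  add_mem' := by
    intro a b ha hb
    intro k
    obtain ⟨h1, h2⟩ := ha k
    obtain ⟨h3, h4⟩ := hb k
    exact ⟨by rw [mul_add, h1, h3, smul_add], by rw [add_mul, h2, h4, smul_add]⟩
  zero_mem' := by intro k; simp
  smul_mem' := by
    intro c a ha
    intro k
    obtain ⟨h1, h2⟩ := ha k
    constructor
    · rw [mul_smul_comm, h1, smul_comm]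
    · rw [smul_mul_assoc, h2, smul_comm]

end Paper

namespace Paper

lemma qint_zero' {K : Type*} [Field K] (x : K) : qint x 0 = 0 := by
  simp [qint]

lemma qint_succ' {K : Type*} [Field K] (x : K) (hx : x ≠ 0) (a : ℤ) :
    qint x (a + 1) = qint x a + x ^ a := by
  rcases lt_trichotomy a (-1) with h | h | h
  · obtain ⟨m, rfl⟩ : ∃ m : ℕ, a = -((m : ℤ) + 2) := ⟨(-a - 2).toNat, by omega⟩
    unfold qint
    rw [if_neg (by omega), if_neg (by omega)]
    have e1 : (-(-((m : ℤ) + 2) + 1)).toNat = m + 1 := by omega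
    have e2 : (-(-((m : ℤ) + 2))).toNat = m + 1 + 1 := by omega
    rw [e1, e2, Finset.sum_range_succ _ (m + 1)]
    have e3 : (-(((m + 1 : ℕ) : ℤ) + 1)) = -((m : ℤ) + 2) := by push_cast; ring
    rw [e3]; ring
  · subst h
    simp [qint]
  · obtain ⟨m, rfl⟩ : ∃ m : ℕ, a = (m : ℤ) := ⟨a.toNat, by omega⟩
    unfold qint
    rw [if_pos (by omega), if_pos (by omega)]
    have e1 : ((m : ℤ) + 1).toNat = m + 1 := by omega
    rw [e1, Finset.sum_range_succ]
    simp

lemma qint_add' {K : Type*} [Field K] (x : K) (hx : x ≠ 0) (b c : ℤ) :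
    qint x (b + c) = qint x b + x ^ b * qint x c := by
  induction c using Int.induction_on with
  | zero => simp [qint_zero']
  | succ i ih =>
    rw [← add_assoc, qint_succ' x hx, qint_succ' x hx, ih, zpow_add₀ hx]; ring
  | pred i ih =>
    have h1 := qint_succ' x hx (b + (-(i : ℤ) - 1))
    have h2 := qint_succ' x hx (-(i : ℤ) - 1)
    have e1 : b + (-(i : ℤ) - 1) + 1 = b + -(i : ℤ) := by ring
    have e2 : (-(i : ℤ) - 1) + 1 = -(i : ℤ) := by ring
    rw [e1, ih, zpow_add₀ hx] at h1
    rw [e2] at h2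
    rw [h2] at h1
    linear_combination -h1

lemma qint_eq_iff {K : Type*} [Field K] (x : K) (hx : x ≠ 0) (a b : ℤ) :
    qint x a = qint x b ↔ qint x (a - b) = 0 := by
  have h := qint_add' x hx b (a - b)
  rw [add_sub_cancel] at h
  rw [h]
  have := zpow_ne_zero b hx
  simp [this]

lemma qint_neg_eq_zero {K : Type*} [Field K] (x : K) (hx : x ≠ 0) (a : ℤ) :
    qint x (-a) = 0 ↔ qint x a = 0 := by
  have h := qint_eq_iff x hx 0 a
  rw [qint_zero', zero_sub] at h
  rw [← h, eq_comm]

section tab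
variable {ℓ n : ℕ}

lemma node_mem (T : StdTableau ℓ n) {k : ℕ} (h1 : 1 ≤ k) (h2 : k ≤ n) :
    T.node k ∈ T.shape.diagram := by
  apply Function.invFunOn_mem
  exact T.bijOn.surjOn ⟨h1, h2⟩

lemma entry_node (T : StdTableau ℓ n) {k : ℕ} (h1 : 1 ≤ k) (h2 : k ≤ n) :
    T.entry (T.node k) = k := by
  apply Function.invFunOn_eq (f := T.entry)
  exact T.bijOn.surjOn ⟨h1, h2⟩

lemma entry_bounds (T : StdTableau ℓ n) {A : Node} (h : A ∈ T.shape.diagram) :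
    1 ≤ T.entry A ∧ T.entry A ≤ n := T.bijOn.mapsTo h

lemma node_entry (T : StdTableau ℓ n) {A : Node} (h : A ∈ T.shape.diagram) :
    T.node (T.entry A) = A := by
  obtain ⟨h1, h2⟩ := entry_bounds T h
  exact T.bijOn.injOn (node_mem T h1 h2) h (entry_node T h1 h2)

lemma mem_down (T : StdTableau ℓ n) {l r c r' c' : ℕ} (h : (l, r, c) ∈ T.shape.diagram)
    (hr : r' ≤ r) (hc : c' ≤ c) : (l, r', c') ∈ T.shape.diagram := by
  have := T.shape.antitone l hr
  simp only [Multipartition.diagram, Set.mem_setOf_eq] at h ⊢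
  omega

lemma entry_row (T : StdTableau ℓ n) {l r c' : ℕ} (j : ℕ)
    (h : (l, r, c' + j) ∈ T.shape.diagram) :
    T.entry (l, r, c') + j ≤ T.entry (l, r, c' + j) := by
  induction j with
  | zero => simp
  | succ j ih =>
    have := ih (mem_down T h le_rfl (by omega))
    have h3 : T.entry (l, r, c' + j) < T.entry (l, r, c' + (j + 1)) := T.row_inc l r (c' + j) h
    omega

lemma entry_col (T : StdTableau ℓ n) {l r' c : ℕ} (j : ℕ)
    (h : (l, r' + j, c) ∈ T.shape.diagram) :
    T.entry (l, r', c) + j ≤ T.entry (l, r' + j, c) := by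
  induction j with
  | zero => simp
  | succ j ih =>
    have := ih (mem_down T h (by omega) le_rfl)
    have h3 : T.entry (l, r' + j, c) < T.entry (l, r' + (j + 1), c) := T.col_inc l (r' + j) c h
    omega

lemma entry_lt (T : StdTableau ℓ n) {l r c r' c' : ℕ} (h : (l, r, c) ∈ T.shape.diagram)
    (hr : r' ≤ r) (hc : c' ≤ c) (hne : r' < r ∨ c' < c) :
    T.entry (l, r', c') < T.entry (l, r, c) := by
  obtain ⟨i, rfl⟩ := Nat.exists_eq_add_of_le hr
  obtain ⟨j, rfl⟩ := Nat.exists_eq_add_of_le hc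
  have h1 := entry_col T i h
  have h2 := entry_row T j (mem_down T h (Nat.le_add_right r' i) le_rfl)
  omega

lemma tab_ext (S T : StdTableau ℓ n) (h : ∀ k, 1 ≤ k → k ≤ n → S.node k = T.node k) :
    S = T := by
  have hd : S.shape.diagram = T.shape.diagram := by
    ext A
    constructor
    · intro hA
      obtain ⟨h1, h2⟩ := entry_bounds S hA
      rw [← node_entry S hA, h _ h1 h2]; exact node_mem T h1 h2
    · intro hA
      obtain ⟨h1, h2⟩ := entry_bounds T hA
      rw [← node_entry T hA, ← h _ h1 h2]; exact node_mem S h1 h2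
  have he : S.entry = T.entry := by
    ext A
    by_cases hA : A ∈ S.shape.diagram
    · obtain ⟨h1, h2⟩ := entry_bounds S hA
      have := h _ h1 h2
      rw [node_entry S hA] at this
      conv_rhs => rw [this]
      rw [entry_node T h1 h2]
    · rw [S.entry_zero A hA, T.entry_zero A (hd ▸ hA)]
  have hs : S.shape = T.shape := by
    have hp : S.shape.part = T.shape.part := by
      ext l r
      have : ∀ c, c < S.shape.part l r ↔ c < T.shape.part l r := fun c => by
        have := Set.ext_iff.1 hd (l, r, c)
        simpa [Multipartition.diagram] using this
      exact Nat.le_antisymm (Nat.le_of_not_lt fun hh => absurd ((this _).1 hh) (lt_irrefl _))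
        (Nat.le_of_not_lt fun hh => absurd ((this _).2 hh) (lt_irrefl _))
    cases hS : S.shape
    cases hT : T.shape
    simp only [hS, hT] at hp
    subst hp
    rfl
  cases S
  cases T
  simp only at hs he
  subst hs he
  rfl

/-- Nodes addable to a common diagram have well separated contents. -/
lemma addable_sep (P : Node → Prop) (k : ℕ)
    (hcard : ∀ F : Finset Node, (∀ X ∈ F, P X) → F.card + 1 ≤ k)
    (l a b l' a' b' : ℕ)
    (hA : ∀ i c, i ≤ a → c ≤ b → (i < a ∨ c < b) → P (l, i, c))
    (hB : ∀ i c, i ≤ a' → c ≤ b' → (i < a' ∨ c < b') → P (l', i, c))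
    (nA : ¬ P (l, a, b)) (nB : ¬ P (l', a', b')) :
    (l ≠ l' → b + a' + 1 ≤ k) ∧ (l = l' → a < a' → b' < b ∧ b + a' ≤ k + b' + a) ∧
      (l = l' → a = a' → b = b') := by
  refine ⟨?_, ?_, ?_⟩
  · intro hl
    have := hcard ((Finset.range b).image (fun c => ((l, a, c) : Node)) ∪
      (Finset.range a').image (fun i => ((l', i, b') : Node))) (by
        intro X hX
        simp only [Finset.mem_union, Finset.mem_image, Finset.mem_range] at hX
        rcases hX with ⟨c, hc, rfl⟩ | ⟨i, hi, rfl⟩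
        · exact hA _ _ le_rfl hc.le (Or.inr hc)
        · exact hB _ _ hi.le le_rfl (Or.inl hi))
    rw [Finset.card_union_of_disjoint, Finset.card_image_of_injective,
      Finset.card_image_of_injective] at this
    · simpa using this
    · intro i j h; simpa using h
    · intro i j h; simpa using h
    · rw [Finset.disjoint_left]
      intro X h1 h2
      simp only [Finset.mem_image] at h1 h2
      obtain ⟨_, _, rfl⟩ := h1
      obtain ⟨_, _, h⟩ := h2
      simp only [Prod.mk.injEq] at h
      exact hl h.1.symm
  · rintro rfl haa
    have hbb : b' < b := by
      by_contra hcon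
      exact nA (hB _ _ haa.le (by omega) (Or.inl haa))
    refine ⟨hbb, ?_⟩
    have := hcard ((Finset.Ico b' b).image (fun c => ((l, a, c) : Node)) ∪
      (Finset.Ioo a a').image (fun i => ((l, i, b') : Node))) (by
        intro X hX
        simp only [Finset.mem_union, Finset.mem_image, Finset.mem_Ico, Finset.mem_Ioo] at hX
        rcases hX with ⟨c, hc, rfl⟩ | ⟨i, hi, rfl⟩
        · exact hA _ _ le_rfl hc.2.le (Or.inr hc.2)
        · exact hB _ _ hi.2.le le_rfl (Or.inl hi.2))
    rw [Finset.card_union_of_disjoint, Finset.card_image_of_injective,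
      Finset.card_image_of_injective] at this
    · simp only [Nat.card_Ico, Nat.card_Ioo] at this
      omega
    · intro i j h; simpa using h
    · intro i j h; simpa using h
    · rw [Finset.disjoint_left]
      intro X h1 h2
      simp only [Finset.mem_image, Finset.mem_Ioo] at h1 h2
      obtain ⟨_, _, rfl⟩ := h1
      obtain ⟨_, h3, h⟩ := h2
      simp only [Prod.mk.injEq] at h
      omega
  · rintro rfl rfl
    rcases lt_trichotomy b b' with h | h | h
    · exact absurd (hB _ _ le_rfl h.le (Or.inr h)) nA
    · exact h
    · exact absurd (hA _ _ le_rfl h.le (Or.inr h)) nB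

lemma node_comp_lt (T : StdTableau ℓ n) {A : Node} (h : A ∈ T.shape.diagram) : A.1 < ℓ := by
  by_contra hcon
  have := T.shape.comp_bound A.1 (by omega) A.2.1
  simp only [Multipartition.diagram, Set.mem_setOf_eq] at h
  omega

lemma forward (κ : ℕ → ℤ) (Z : ℤ → Prop) (hZneg : ∀ d, Z (-d) → Z d)
    (hfac : ∀ d : ℕ, 1 ≤ d → d ≤ n → ¬ Z d)
    (hprod : ∀ l m, l < m → m < ℓ → ∀ d : ℤ, -(n : ℤ) < d → d < n → ¬ Z (κ l - κ m + d))
    (S T : StdTableau ℓ n)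
    (h : ∀ k, 1 ≤ k → k ≤ n → Z (content κ S k - content κ T k)) : S = T := by
  apply tab_ext
  intro k
  induction k using Nat.strong_induction_on with
  | _ k ih =>
  intro h1 h2
  have hz := h k h1 h2
  have hmS := node_mem S h1 h2
  have hmT := node_mem T h1 h2
  have heS := entry_node S h1 h2
  have heT := entry_node T h1 h2
  simp only [content] at hz
  generalize S.node k = A at *
  generalize T.node k = B at *
  obtain ⟨l, a, b⟩ := A
  obtain ⟨l', a', b'⟩ := B
  simp only at hz
  set P : Node → Prop := fun X => X ∈ S.shape.diagram ∧ S.entry X < k with hP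
  have hTP : ∀ X, X ∈ T.shape.diagram → T.entry X < k → P X := by
    intro X hX hlt
    obtain ⟨g1, g2⟩ := entry_bounds T hX
    have := ih _ hlt g1 g2
    rw [node_entry T hX] at this
    refine ⟨?_, ?_⟩
    · rw [← this]; exact node_mem S g1 g2
    · rw [← this, entry_node S g1 g2]; exact hlt
  have hPT : ∀ X, P X → T.entry X < k := by
    rintro X ⟨hX, hlt⟩
    obtain ⟨g1, g2⟩ := entry_bounds S hX
    have := ih _ hlt g1 g2
    rw [node_entry S hX] at this
    rw [this, entry_node T g1 g2]; exact hlt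
  have hcard : ∀ F : Finset Node, (∀ X ∈ F, P X) → F.card + 1 ≤ k := by
    intro F hF
    have : F.card ≤ (Finset.Ico 1 k).card := by
      apply Finset.card_le_card_of_injOn S.entry
      · intro X hX
        have := hF X hX
        have h3 := entry_bounds S this.1
        simp only [Finset.coe_Ico, Set.mem_Ico]
        exact ⟨h3.1, this.2⟩
      · intro X hX Y hY hXY
        exact S.bijOn.injOn (hF X hX).1 (hF Y hY).1 hXY
    simp only [Nat.card_Ico] at this
    omega
  have hA : ∀ i c, i ≤ a → c ≤ b → (i < a ∨ c < b) → P (l, i, c) := by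
    intro i c hi hc hne
    exact ⟨mem_down S hmS hi hc, heS ▸ entry_lt S hmS hi hc hne⟩
  have hB : ∀ i c, i ≤ a' → c ≤ b' → (i < a' ∨ c < b') → P (l', i, c) := by
    intro i c hi hc hne
    exact hTP _ (mem_down T hmT hi hc) (heT ▸ entry_lt T hmT hi hc hne)
  have nA : ¬ P (l, a, b) := fun hh => by
    have := hh.2
    omega
  have nB : ¬ P (l', a', b') := fun hh => by
    have := hPT _ hh
    omega
  obtain ⟨c1, c2, c3⟩ := addable_sep P k hcard l a b l' a' b' hA hB nA nB
  obtain ⟨d1, d2, d3⟩ := addable_sep P k hcard l' a' b' l a b hB hA nB nA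
  have hlS := node_comp_lt S hmS
  have hlT := node_comp_lt T hmT
  simp only at hlS hlT
  by_cases hl : l = l'
  · subst hl
    rcases lt_trichotomy a a' with haa | haa | haa
    · exfalso
      obtain ⟨e1, e2⟩ := c2 rfl haa
      apply hfac (b - b' + (a' - a)) (by omega) (by omega)
      convert hz using 1
      push_cast [Nat.cast_sub e1.le, Nat.cast_sub haa.le]
      ring
    · rw [c3 rfl haa, haa]
    · exfalso
      obtain ⟨e1, e2⟩ := d2 rfl haa
      apply hfac (b' - b + (a - a')) (by omega) (by omega)
      apply hZneg
      convert hz using 1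
      push_cast [Nat.cast_sub e1.le, Nat.cast_sub haa.le]
      ring
  · exfalso
    have f1 := c1 hl
    have f2 := d1 (Ne.symm hl)
    rcases lt_or_gt_of_ne hl with hlt | hlt
    · apply hprod l l' hlt hlT ((b : ℤ) - a - (b' - a')) (by omega) (by omega)
      convert hz using 1
      ring
    · apply hprod l' l hlt hlS ((b' : ℤ) - a' - (b - a)) (by omega) (by omega)
      apply hZneg
      convert hz using 1
      ring

lemma exists_tab (f : ℕ → Node) (hinj : ∀ i < n, ∀ j < n, f i = f j → i = j)
    (hcomp : ∀ k < n, (f k).1 < ℓ)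
    (hrow : ∀ k < n, ∀ l r c, f k = (l, r, c + 1) → ∃ j < k, f j = (l, r, c))
    (hcol : ∀ k < n, ∀ l r c, f k = (l, r + 1, c) → ∃ j < k, f j = (l, r, c)) :
    ∃ T : StdTableau ℓ n, ∀ k < n, T.node (k + 1) = f k := by
  set R : ℕ → ℕ → Finset ℕ := fun l r =>
    (Finset.range n).filter (fun k => (f k).1 = l ∧ (f k).2.1 = r) with hR
  have hmem : ∀ l r c, c < (R l r).card ↔ ∃ k < n, f k = (l, r, c) := by
    intro l r c
    have hc1 : ((R l r).image (fun k => (f k).2.2)).card = (R l r).card := by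
      apply Finset.card_image_of_injOn
      intro i hi j hj hij
      simp only [hR, Finset.coe_filter, Finset.mem_range, Set.mem_setOf_eq] at hi hj hij
      apply hinj i hi.1 j hj.1
      ext
      · rw [hi.2.1, hj.2.1]
      · rw [hi.2.2, hj.2.2]
      · exact hij
    have him : ∀ x, x ∈ (R l r).image (fun k => (f k).2.2) ↔ ∃ k < n, f k = (l, r, x) := by
      intro x
      simp only [hR, Finset.mem_image, Finset.mem_filter, Finset.mem_range]
      constructor
      · rintro ⟨k, ⟨hk, g1, g2⟩, g3⟩
        exact ⟨k, hk, by ext <;> simp [g1, g2, g3]⟩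
      · rintro ⟨k, hk, g⟩
        exact ⟨k, ⟨hk, by simp [g]⟩, by simp [g]⟩
    have hdown : ∀ y x, x ≤ y → y ∈ (R l r).image (fun k => (f k).2.2) →
        x ∈ (R l r).image (fun k => (f k).2.2) := by
      intro y
      induction y with
      | zero => intro x hx h; obtain rfl : x = 0 := by omega
                exact h
      | succ y ih =>
        intro x hx h
        rcases Nat.lt_or_ge y x with g | g
        · obtain rfl : x = y + 1 := by omega
          exact h
        · apply ih x g
          rw [him] at h ⊢
          obtain ⟨k, hk, e⟩ := h
          obtain ⟨j, hj, e'⟩ := hrow k hk _ _ _ e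
          exact ⟨j, by omega, e'⟩
    rw [← him, ← hc1]
    constructor
    · intro hlt
      by_contra hcon
      have : (R l r).image (fun k => (f k).2.2) ⊆ Finset.range c := by
        intro x hx
        rw [Finset.mem_range]
        by_contra hxc
        exact hcon (hdown x c (by omega) hx)
      have := Finset.card_le_card this
      rw [Finset.card_range] at this
      omega
    · intro hc
      have : Finset.range (c + 1) ⊆ (R l r).image (fun k => (f k).2.2) := by
        intro x hx
        rw [Finset.mem_range] at hx
        exact hdown c x (by omega) hc
      have := Finset.card_le_card this
      rw [Finset.card_range] at this
      omega
  have hrlt : ∀ k < n, (f k).2.1 ≤ k := by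
    intro k
    induction k using Nat.strong_induction_on with
    | _ k ih =>
    intro hk
    rcases hf : f k with ⟨l, r, c⟩
    cases r with
    | zero => simp
    | succ r =>
      obtain ⟨j, hj, e⟩ := hcol k hk _ _ _ hf
      have := ih j hj (by omega)
      rw [e] at this
      simp only at this ⊢
      omega
  let μ : Multipartition ℓ n :=
    { part := fun l r => (R l r).card
      comp_bound := by
        intro l hl r
        rw [Finset.card_eq_zero, Finset.filter_eq_empty_iff]
        intro k hk hh
        have := hcomp k (Finset.mem_range.1 hk)
        omega
      antitone := by
        intro l
        apply antitone_nat_of_succ_le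
        intro r
        by_contra hcon
        push Not at hcon
        obtain ⟨k, hk, e⟩ := (hmem _ _ _).1 hcon
        obtain ⟨j, hj, e'⟩ := hcol k hk _ _ _ e
        exact absurd ((hmem _ _ _).2 ⟨j, by omega, e'⟩) (lt_irrefl _)
      row_bound := by
        intro l r hr
        rw [Finset.card_eq_zero, Finset.filter_eq_empty_iff]
        intro k hk hh
        have := Finset.mem_range.1 hk
        have := hrlt k this
        omega
      size := by
        rw [← Finset.sum_product' (Finset.range ℓ) (Finset.range n) (fun l r => (R l r).card)]
        have := Finset.card_eq_sum_card_fiberwise (s := Finset.range n)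
          (t := Finset.range ℓ ×ˢ Finset.range n) (f := fun k => ((f k).1, (f k).2.1)) (by
            intro k hk
            have hk' : k < n := by simpa using hk
            have g1 := hcomp k hk'
            have g2 := hrlt k hk'
            simp only [Finset.coe_product, Finset.coe_range, Set.mem_prod, Set.mem_Iio]
            omega)
        rw [Finset.card_range] at this
        conv_rhs => rw [this]
        apply Finset.sum_congr rfl
        rintro ⟨l, r⟩ _
        simp [hR] }
  have hdiag : ∀ A, A ∈ μ.diagram ↔ ∃ k < n, f k = A := by
    rintro ⟨l, r, c⟩
    exact hmem l r c
  let E : Node → ℕ := fun A => if h : ∃ k < n, f k = A then h.choose + 1 else 0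
  have hE : ∀ k < n, E (f k) = k + 1 := by
    intro k hk
    have hh : ∃ j < n, f j = f k := ⟨k, hk, rfl⟩
    simp only [E, dif_pos hh]
    rw [hinj _ hh.choose_spec.1 k hk hh.choose_spec.2]
  let T : StdTableau ℓ n :=
    { shape := μ
      entry := E
      entry_zero := by
        intro A hA
        rw [hdiag] at hA
        simp only [E, dif_neg hA]
      bijOn := by
        refine ⟨?_, ?_, ?_⟩
        · intro A hA
          obtain ⟨k, hk, rfl⟩ := (hdiag A).1 hA
          rw [hE k hk]
          exact ⟨by omega, by omega⟩
        · intro A hA B hB hAB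
          obtain ⟨k, hk, rfl⟩ := (hdiag A).1 hA
          obtain ⟨j, hj, rfl⟩ := (hdiag B).1 hB
          rw [hE k hk, hE j hj] at hAB
          rw [Nat.succ_injective hAB]
        · intro k hk
          have h1 := hk.1
          have h2 := hk.2
          refine ⟨f (k - 1), (hdiag _).2 ⟨k - 1, by omega, rfl⟩, ?_⟩
          rw [hE _ (by omega)]
          omega
      row_inc := by
        intro l r c h
        obtain ⟨k, hk, e⟩ := (hdiag _).1 h
        obtain ⟨j, hj, e'⟩ := hrow k hk _ _ _ e
        rw [← e, ← e', hE k hk, hE j (by omega)]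
        omega
      col_inc := by
        intro l r c h
        obtain ⟨k, hk, e⟩ := (hdiag _).1 h
        obtain ⟨j, hj, e'⟩ := hcol k hk _ _ _ e
        rw [← e, ← e', hE k hk, hE j (by omega)]
        omega }
  refine ⟨T, fun k hk => ?_⟩
  have hm : f k ∈ T.shape.diagram := (hdiag _).2 ⟨k, hk, rfl⟩
  have := node_entry T hm
  have he : T.entry (f k) = k + 1 := hE k hk
  rwa [he] at this

lemma exists_rect (hℓ : 1 ≤ ℓ) (w : ℕ) (hw : 1 ≤ w) :
    ∃ T : StdTableau ℓ n, ∀ k < n, T.node (k + 1) = (0, k / w, k % w) := by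
  apply exists_tab
  · intro i _ j _ h
    simp only [Prod.mk.injEq, true_and] at h
    rw [← Nat.div_add_mod i w, ← Nat.div_add_mod j w, h.1, h.2]
  · intro k _; simp only; omega
  · intro k _ l r c h
    simp only [Prod.mk.injEq] at h
    obtain ⟨rfl, rfl, h3⟩ := h
    have h4 := Nat.div_add_mod k w
    have h5 := Nat.mod_lt k hw
    have h6 : k - 1 = c + w * (k / w) := by omega
    refine ⟨k - 1, by omega, ?_⟩
    simp only [Prod.mk.injEq, true_and]
    rw [h6]
    constructor
    · rw [Nat.add_mul_div_left _ _ hw, Nat.div_eq_of_lt (by omega)]; simp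
    · rw [Nat.add_mul_mod_self_left, Nat.mod_eq_of_lt (by omega)]
  · intro k _ l r c h
    simp only [Prod.mk.injEq] at h
    obtain ⟨rfl, h2, rfl⟩ := h
    have h4 := Nat.div_add_mod k w
    have h5 := Nat.mod_lt k hw
    rw [h2, Nat.mul_add, Nat.mul_one] at h4
    refine ⟨k - w, by omega, ?_⟩
    have h6 : k - w = k % w + w * r := by omega
    simp only [Prod.mk.injEq, true_and]
    rw [h6]
    constructor
    · rw [Nat.add_mul_div_left _ _ hw, Nat.div_eq_of_lt (by omega)]; simp
    · rw [Nat.add_mul_mod_self_left, Nat.mod_mod]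

lemma exists_two (l m d : ℕ) (hl : l < ℓ) (hm : m < ℓ) (hlm : l ≠ m) :
    ∃ T : StdTableau ℓ n, ∀ k < n,
      T.node (k + 1) = if k < d then (l, 0, k) else (m, 0, k - d) := by
  apply exists_tab
  · intro i _ j _ h
    split_ifs at h <;> simp only [Prod.mk.injEq, true_and] at h <;> omega
  · intro k _; split_ifs <;> assumption
  · intro k _ l' r c h
    split_ifs at h with hk
    · simp only [Prod.mk.injEq] at h
      obtain ⟨rfl, rfl, h3⟩ := h
      refine ⟨c, by omega, ?_⟩
      rw [if_pos (by omega)]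
    · simp only [Prod.mk.injEq] at h
      obtain ⟨rfl, rfl, h3⟩ := h
      refine ⟨k - 1, by omega, ?_⟩
      rw [if_neg (by omega)]
      simp only [Prod.mk.injEq, true_and]
      omega
  · intro k _ l' r c h
    split_ifs at h <;> simp at h

end tab

lemma qint_mul_zero {K : Type*} [Field K] (x : K) (hx : x ≠ 0) (d : ℤ) (h : qint x d = 0)
    (q : ℕ) : qint x (q * d) = 0 := by
  induction q with
  | zero => simp [qint_zero']
  | succ q ih =>
    push_cast
    rw [add_mul, one_mul, qint_add' x hx, ih, h]
    simp

lemma backward_two {K : Type*} [Field K] (x : K) (hx : x ≠ 0) (n ℓ : ℕ) (κ : ℕ → ℤ)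
    (H : ∀ S T : StdTableau ℓ n,
      (S = T ↔ ∀ r ∈ Finset.Icc 1 n, qint x (content κ S r) = qint x (content κ T r)))
    (l m d : ℕ) (hl : l < ℓ) (hm : m < ℓ) (hlm : l ≠ m) (hd : d < n) :
    qint x (κ l - κ m + d) ≠ 0 := by
  intro h0
  obtain ⟨S, hS⟩ := exists_two (n := n) l m n hl hm hlm
  obtain ⟨T, hT⟩ := exists_two (n := n) l m d hl hm hlm
  have hST : S = T := by
    rw [H]
    intro r hr
    obtain ⟨r1, r2⟩ := Finset.mem_Icc.1 hr
    obtain ⟨k, rfl⟩ : ∃ k, r = k + 1 := ⟨r - 1, by omega⟩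
    rw [qint_eq_iff x hx]
    simp only [content]
    rw [hS k (by omega), hT k (by omega), if_pos (by omega)]
    split_ifs with hk
    · simp [qint_zero']
    · convert h0 using 2
      push_cast [Nat.cast_sub (Nat.le_of_not_lt hk)]
      ring
  have e1 := hS d hd
  have e2 := hT d hd
  rw [if_pos hd] at e1
  rw [if_neg (lt_irrefl _), ← hST, e1] at e2
  simp only [Prod.mk.injEq] at e2
  exact hlm e2.1

lemma backward_fac {K : Type*} [Field K] (x : K) (hx : x ≠ 0) (n ℓ : ℕ) (hℓ : 1 ≤ ℓ)
    (κ : ℕ → ℤ)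
    (H : ∀ S T : StdTableau ℓ n,
      (S = T ↔ ∀ r ∈ Finset.Icc 1 n, qint x (content κ S r) = qint x (content κ T r)))
    (d : ℕ) (h1 : 1 ≤ d) (h2 : d ≤ n) : qint x (d : ℤ) ≠ 0 := by
  intro h0
  rcases Nat.lt_or_ge d 2 with hd | hd
  · obtain rfl : d = 1 := by omega
    simp [qint] at h0
  obtain ⟨S, hS⟩ := exists_rect (n := n) hℓ n (by omega)
  obtain ⟨T, hT⟩ := exists_rect (n := n) hℓ (d - 1) (by omega)
  have hST : S = T := by
    rw [H]
    intro r hr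
    obtain ⟨r1, r2⟩ := Finset.mem_Icc.1 hr
    obtain ⟨k, rfl⟩ : ∃ k, r = k + 1 := ⟨r - 1, by omega⟩
    rw [qint_eq_iff x hx]
    simp only [content]
    rw [hS k (by omega), hT k (by omega), Nat.div_eq_of_lt (by omega),
      Nat.mod_eq_of_lt (by omega)]
    convert qint_mul_zero x hx d h0 (k / (d - 1)) using 2
    have h4 : (((d - 1) * (k / (d - 1)) + k % (d - 1) : ℕ) : ℤ) = k := by
      rw [Nat.div_add_mod]
    rw [Nat.cast_add, Nat.cast_mul, Nat.cast_sub h1] at h4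
    simp only
    linear_combination -h4
  have e1 := hS (d - 1) (by omega)
  have e2 := hT (d - 1) (by omega)
  rw [← hST, e1] at e2
  simp only [Prod.mk.injEq] at e2
  have e3 := e2.2.1
  rw [Nat.div_eq_of_lt (by omega), Nat.div_self (by omega)] at e3
  omega

/-- `(K, t)` separates `Std(P_n)` if and only if standard tableaux are
distinguished by the quantum integers of their content sequences. -/
theorem separation_criterion (n ℓ : ℕ) (hℓ : 1 ≤ ℓ) (κ : ℕ → ℤ)
    (K : Type) [Field K] (t : Kˣ) :
    (((∏ d ∈ Finset.Icc 1 n, qint (t : K) (d : ℤ)) *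
        ∏ l ∈ Finset.range ℓ, ∏ m ∈ Finset.Ioo l ℓ,
          ∏ d ∈ Finset.Ioo (-(n : ℤ)) (n : ℤ), qint (t : K) (κ l - κ m + d)) ≠ 0) ↔
    ∀ S T : StdTableau ℓ n,
      (S = T ↔ ∀ r ∈ Finset.Icc 1 n,
        qint (t : K) (content κ S r) = qint (t : K) (content κ T r)) := by
  have hx : (t : K) ≠ 0 := t.ne_zero
  rw [mul_ne_zero_iff]
  simp only [Finset.prod_ne_zero_iff]
  constructor
  · rintro ⟨hf, hp⟩ S T
    constructor
    · rintro rfl r _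
      rfl
    · intro h
      apply forward κ (fun d => qint (t : K) d = 0)
        (fun d hd => (qint_neg_eq_zero (t : K) hx d).1 hd)
        (fun d h1 h2 => hf d (Finset.mem_Icc.2 ⟨h1, h2⟩))
        (fun l m hlm hm d h1 h2 => hp l (Finset.mem_range.2 (by omega)) m
          (Finset.mem_Ioo.2 ⟨hlm, hm⟩) d (Finset.mem_Ioo.2 ⟨h1, h2⟩))
      intro k h1 h2
      exact (qint_eq_iff (t : K) hx _ _).1 (h k (Finset.mem_Icc.2 ⟨h1, h2⟩))
  · intro H
    refine ⟨fun d hd => ?_, fun l hl m hm d hd => ?_⟩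
    · obtain ⟨h1, h2⟩ := Finset.mem_Icc.1 hd
      exact backward_fac (t : K) hx n ℓ hℓ κ H d h1 h2
    · have hl' := Finset.mem_range.1 hl
      obtain ⟨hlm, hm'⟩ := Finset.mem_Ioo.1 hm
      obtain ⟨h1, h2⟩ := Finset.mem_Ioo.1 hd
      rcases le_or_gt 0 d with h0 | h0
      · obtain ⟨e, rfl⟩ := Int.eq_ofNat_of_zero_le h0
        exact backward_two (t : K) hx n ℓ κ H l m e hl' hm' (by omega) (by omega)
      · obtain ⟨e, rfl⟩ : ∃ e : ℕ, d = -(e : ℤ) := ⟨(-d).toNat, by omega⟩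
        have := backward_two (t : K) hx n ℓ κ H m l e hm' hl' (by omega) (by omega)
        intro hz
        apply this
        rw [← qint_neg_eq_zero (t : K) hx]
        convert hz using 2
        ring

end Paper
end

section
/- Let K be a field, t ∈ K^×, and suppose (K,t) separates Std(P_n). Fix an integer e ≥ 2, let λ be an ℓ-multipartition of n, let 1 ≤ r < n, and let s ∈ Std(λ) be such that u = s(r,r+1) is standard; set i = res(s) ∈ I^n. Let α_r(s), α_r(u) ∈ K be scalars satisfying α_r(s)·α_r(u) = ([1+ρ_r(s)]_t [1+ρ_r(u)]_t)/([ρ_r(s)]_t [ρ_r(u)]_t), and define β_r(s) = t^{î_r − c_r(s)} α_r(s)/[1−ρ_r(s)]_t if i_r = i_{r+1}, β_r(s) = t^{c_{r+1}(s) − î_r} α_r(s) [ρ_r(s)]_t if i_r = i_{r+1}+1, and β_r(s) = t^{−ρ_r(s)} α_r(s) [ρ_r(s)]_t/[1−ρ_r(s)]_t otherwise, and define β_r(u) by the same formulas with u in place of s (note res(u) = s_r·i). Then: β_r(s)β_r(u) = t^{c_r(s)+c_{r+1}(s)−î_r−î_{r+1}} [1−ρ_r(s)]_t [1+ρ_r(s)]_t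 if i_r ⇄ i_{r+1}; β_r(s)β_r(u) = t^{c_{r+1}(s)−î_{r+1}} [1+ρ_r(s)]_t if i_r → i_{r+1}; β_r(s)β_r(u) = t^{c_r(s)−î_r} [1−ρ_r(s)]_t if i_r ← i_{r+1}; β_r(s)β_r(u) = −t^{2î_r−2c_{r+1}(s)}/([ρ_r(s)]_t)² if i_r = i_{r+1}; and β_r(s)β_r(u) = 1 otherwise. -/
open scoped BigOperators
open scoped Classical

namespace Paper

/-- The coefficients `β_r(T)` of (4.12)/(E:beta), defined from a seminormal coefficient
`α = α_r(T)` by the residue cases. -/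
noncomputable def betaDef {K : Type*} [Field K] (e : ℕ) {ℓ n : ℕ} (κ : ℕ → ℤ) (t : Kˣ)
    (α : K) (T : StdTableau ℓ n) (r : ℕ) : K :=
  if ((content κ T r : ZMod e) = (content κ T (r + 1) : ZMod e)) then
    (t : K) ^ ((((content κ T r : ZMod e)).val : ℤ) - content κ T r) * α /
      qint (t : K) (1 - rhoTab κ T r)
  else if ((content κ T r : ZMod e) = (content κ T (r + 1) : ZMod e) + 1) then
    (t : K) ^ (content κ T (r + 1) - (((content κ T r : ZMod e)).val : ℤ)) * α *
      qint (t : K) (rhoTab κ T r)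
  else
    (t : K) ^ (-(rhoTab κ T r)) * α * qint (t : K) (rhoTab κ T r) /
      qint (t : K) (1 - rhoTab κ T r)

lemma qint_nat {K : Type*} [Field K] (x : K) (m : ℕ) :
    qint x (m : ℤ) = ∑ k ∈ Finset.range m, x ^ k := by
  simp [qint]

lemma qint_neg_nat {K : Type*} [Field K] (x : K) (hx : x ≠ 0) (m : ℕ) :
    qint x (-(m : ℤ)) = -(x ^ (-(m : ℤ)) * qint x (m : ℤ)) := by
  have h1 : qint x (-(m : ℤ)) = -∑ k ∈ Finset.range m, x ^ (-((k : ℤ) + 1)) := by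
    rcases Nat.eq_zero_or_pos m with h | h
    · subst h; simp [qint]
    · have : ¬ (0 : ℤ) ≤ -(m : ℤ) := by omega
      simp only [qint, if_neg this, neg_neg, Int.toNat_natCast]
  rw [h1, qint_nat, Finset.mul_sum, ← Finset.sum_range_reflect]
  congr 1
  apply Finset.sum_congr rfl
  intro k hk
  have hk' : k < m := Finset.mem_range.mp hk
  rw [← zpow_natCast x k, ← zpow_add₀ hx]
  congr 1
  omega

lemma qint_neg {K : Type*} [Field K] (x : K) (hx : x ≠ 0) (d : ℤ) :
    qint x (-d) = -(x ^ (-d) * qint x d) := by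
  obtain ⟨m, rfl | rfl⟩ := d.eq_nat_or_neg
  · exact qint_neg_nat x hx m
  · rw [neg_neg, qint_neg_nat x hx m]
    have : x ^ (m : ℤ) ≠ 0 := zpow_ne_zero _ hx
    rw [zpow_neg]
    field_simp

lemma qint_neg_ne {K : Type*} [Field K] (x : K) (hx : x ≠ 0) (d : ℤ) (h : qint x d ≠ 0) :
    qint x (-d) ≠ 0 := by
  rw [qint_neg x hx]
  exact neg_ne_zero.mpr (mul_ne_zero (zpow_ne_zero _ hx) h)

lemma sep_same {K : Type*} [Field K] {t : Kˣ} {n ℓ : ℕ} {κ : ℕ → ℤ}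
    (hsep : SeparatesF t n ℓ κ) (d : ℤ) (h0 : d ≠ 0) (h1 : -(n : ℤ) ≤ d) (h2 : d ≤ n) :
    qint (t : K) d ≠ 0 := by
  have hp := left_ne_zero_of_mul hsep
  rw [Finset.prod_ne_zero_iff] at hp
  obtain ⟨m, rfl | rfl⟩ := d.eq_nat_or_neg
  · exact hp m (Finset.mem_Icc.mpr (by omega))
  · exact qint_neg_ne _ t.ne_zero _ (hp m (Finset.mem_Icc.mpr (by omega)))

lemma sep_diff {K : Type*} [Field K] {t : Kˣ} {n ℓ : ℕ} {κ : ℕ → ℤ}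
    (hsep : SeparatesF t n ℓ κ) (l m : ℕ) (hl : l < ℓ) (hm : m < ℓ) (hlm : l ≠ m)
    (d : ℤ) (h1 : -(n : ℤ) < d) (h2 : d < n) :
    qint (t : K) (κ l - κ m + d) ≠ 0 := by
  have key : ∀ l m : ℕ, l < m → m < ℓ → ∀ d : ℤ, -(n : ℤ) < d → d < n →
      qint (t : K) (κ l - κ m + d) ≠ 0 := by
    intro l m hlm hm d h1 h2
    have hp := right_ne_zero_of_mul hsep
    rw [Finset.prod_ne_zero_iff] at hp
    have hp := hp l (Finset.mem_range.mpr (by omega))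
    rw [Finset.prod_ne_zero_iff] at hp
    have hp := hp m (Finset.mem_Ioo.mpr ⟨hlm, hm⟩)
    rw [Finset.prod_ne_zero_iff] at hp
    exact hp d (Finset.mem_Ioo.mpr ⟨h1, h2⟩)
  rcases lt_or_gt_of_ne hlm with h | h
  · exact key l m h hm d h1 h2
  · have := qint_neg_ne _ t.ne_zero _ (key m l h hl (-d) (by omega) (by omega))
    convert this using 2
    ring

lemma hook_bound {ℓ n : ℕ} (T : StdTableau ℓ n) (A B : Node) (hA : A ∈ T.shape.diagram)
    (hB : B ∈ T.shape.diagram) :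
    A.2.2 + B.2.1 + 1 ≤ n ∧ (A.1 ≠ B.1 → A.2.2 + B.2.1 + 2 ≤ n) := by
  obtain ⟨l, r, c⟩ := A
  obtain ⟨l', r', c'⟩ := B
  simp only [Multipartition.diagram, Set.mem_setOf_eq] at hA hB
  set P : Finset Node := (Finset.range (c + 1)).image (fun x => (l, r, x)) with hP
  set Q : Finset Node := (Finset.range (r' + 1)).image (fun x => (l', x, c')) with hQ
  have cP : P.card = c + 1 := by
    rw [hP, Finset.card_image_of_injective, Finset.card_range]
    intro a b h; simpa using h
  have cQ : Q.card = r' + 1 := by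
    rw [hQ, Finset.card_image_of_injective, Finset.card_range]
    intro a b h; simpa using h
  have hsub : ∀ X ∈ P ∪ Q, X ∈ T.shape.diagram := by
    intro X hX
    rcases Finset.mem_union.mp hX with h | h
    · obtain ⟨x, hx, rfl⟩ := Finset.mem_image.mp h
      have := Finset.mem_range.mp hx
      simp only [Multipartition.diagram, Set.mem_setOf_eq]
      omega
    · obtain ⟨x, hx, rfl⟩ := Finset.mem_image.mp h
      have := Finset.mem_range.mp hx
      simp only [Multipartition.diagram, Set.mem_setOf_eq]
      have := T.shape.antitone l' (show x ≤ r' by omega)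
      omega
  have hcard : (P ∪ Q).card ≤ n := by
    have := Finset.card_le_card_of_injOn (s := P ∪ Q) (t := Finset.Icc 1 n) T.entry
      (fun X hX => by
        have := T.bijOn.mapsTo (hsub X hX)
        exact Finset.mem_coe.mpr (Finset.mem_Icc.mpr this))
      (fun X hX Y hY h => T.bijOn.injOn (hsub X hX) (hsub Y hY) h)
    simpa using this
  have hui := Finset.card_union_add_card_inter P Q
  have hmem : ∀ X ∈ P ∩ Q, X = (l, r, c') ∧ l = l' := by
    intro X hX
    obtain ⟨h1, h2⟩ := Finset.mem_inter.mp hX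
    obtain ⟨x, _, rfl⟩ := Finset.mem_image.mp h1
    obtain ⟨y, _, h⟩ := Finset.mem_image.mp h2
    simp only [Prod.mk.injEq] at h
    obtain ⟨h3, h4, h5⟩ := h
    subst h3 h4 h5
    exact ⟨rfl, rfl⟩
  have hi1 : (P ∩ Q).card ≤ 1 := by
    apply Finset.card_le_one.mpr
    intro X hX Y hY
    rw [(hmem X hX).1, (hmem Y hY).1]
  refine ⟨by simp only; omega, fun hne => ?_⟩
  have hi0 : (P ∩ Q).card = 0 := by
    rw [Finset.card_eq_zero, Finset.eq_empty_iff_forall_notMem]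
    intro X hX
    exact hne (hmem X hX).2
  simp only
  omega

lemma node_spec {ℓ n : ℕ} (T : StdTableau ℓ n) (k : ℕ) (h1 : 1 ≤ k) (h2 : k ≤ n) :
    T.node k ∈ T.shape.diagram ∧ T.entry (T.node k) = k := by
  have : ∃ A ∈ T.shape.diagram, T.entry A = k := T.bijOn.surjOn ⟨h1, h2⟩
  exact ⟨Function.invFunOn_mem this, Function.invFunOn_eq this⟩

lemma node_eq {ℓ n : ℕ} (T : StdTableau ℓ n) (k : ℕ) (h1 : 1 ≤ k) (h2 : k ≤ n) (A : Node)
    (hA : A ∈ T.shape.diagram) (h : T.entry A = k) : T.node k = A :=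
  T.bijOn.injOn (node_spec T k h1 h2).1 hA ((node_spec T k h1 h2).2.trans h.symm)

lemma diag_comp {ℓ n : ℕ} (μ : Multipartition ℓ n) (A : Node) (hA : A ∈ μ.diagram) :
    A.1 < ℓ := by
  by_contra h
  have := μ.comp_bound A.1 (by omega) A.2.1
  simp only [Multipartition.diagram, Set.mem_setOf_eq] at hA
  omega

lemma qint_content_ne {K : Type*} [Field K] {t : Kˣ} {n ℓ : ℕ} {κ : ℕ → ℤ}
    (hsep : SeparatesF t n ℓ κ) (T : StdTableau ℓ n) (j k : ℕ) (hj1 : 1 ≤ j) (hj : j ≤ n)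
    (hk1 : 1 ≤ k) (hk : k ≤ n) (δ : ℤ) (hδ1 : -1 ≤ δ) (hδ2 : δ ≤ 1)
    (h0 : content κ T j - content κ T k + δ ≠ 0) :
    qint (t : K) (content κ T j - content κ T k + δ) ≠ 0 := by
  have hA := (node_spec T j hj1 hj).1
  have hB := (node_spec T k hk1 hk).1
  simp only [content] at h0 ⊢
  generalize T.node j = A at *
  generalize T.node k = B at *
  have b1 := hook_bound T A B hA hB
  have b2 := hook_bound T B A hB hA
  by_cases hne : A.1 = B.1
  · rw [hne] at h0 ⊢
    apply sep_same hsep _ h0 <;> omega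
  · have b1 := b1.2 hne
    have b2 := b2.2 (Ne.symm hne)
    have := sep_diff hsep A.1 B.1 (diag_comp _ A hA) (diag_comp _ B hB) hne
      ((A.2.2 : ℤ) - A.2.1 - B.2.2 + B.2.1 + δ) (by omega) (by omega)
    convert this using 2
    ring

lemma content_swap {ℓ n : ℕ} (κ : ℕ → ℤ) (S U : StdTableau ℓ n) (r : ℕ) (hr1 : 1 ≤ r)
    (hrn : r < n) (hshape : U.shape = S.shape) (hU : U.entry = swapEntry S.entry r) :
    content κ U r = content κ S (r + 1) ∧ content κ U (r + 1) = content κ S r := by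
  have hA := node_spec S r hr1 hrn.le
  have hB := node_spec S (r + 1) (by omega) hrn
  have e1 : U.node r = S.node (r + 1) := by
    apply node_eq U r hr1 hrn.le _ (hshape ▸ hB.1)
    rw [hU]; simp [swapEntry, hB.2]
  have e2 : U.node (r + 1) = S.node r := by
    apply node_eq U (r + 1) (by omega) hrn _ (hshape ▸ hA.1)
    rw [hU]; simp [swapEntry, hA.2]
  simp only [content, e1, e2, and_self]

/-- Lemma L:BetaSquared: for `u = s·(r, r+1)` standard and a
seminormal coefficient system, the products `β_r(s)β_r(u)` are given by the quiver
cases. -/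
theorem beta_squared (n ℓ e : ℕ) (hℓ : 1 ≤ ℓ) (he : 2 ≤ e) (κ : ℕ → ℤ)
    (K : Type) [Field K] (t : Kˣ) (hsep : SeparatesF t n ℓ κ)
    (S U : StdTableau ℓ n) (r : ℕ) (hr1 : 1 ≤ r) (hrn : r < n)
    (hshape : U.shape = S.shape) (hU : U.entry = swapEntry S.entry r)
    (αs αu : K)
    (hα : αs * αu = qint (t : K) (1 + rhoTab κ S r) * qint (t : K) (1 + rhoTab κ U r) /
        (qint (t : K) (rhoTab κ S r) * qint (t : K) (rhoTab κ U r)))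
    (ci cj : ℤ) (hci : ci = content κ S r) (hcj : cj = content κ S (r + 1)) :
    (((cj : ZMod e) = (ci : ZMod e) + 1 ∧ (ci : ZMod e) = (cj : ZMod e) + 1 →
      betaDef e κ t αs S r * betaDef e κ t αu U r =
        (t : K) ^ (ci + cj - (((ci : ZMod e)).val : ℤ) - (((cj : ZMod e)).val : ℤ)) *
          (qint (t : K) (1 - (ci - cj)) * qint (t : K) (1 + (ci - cj))))) ∧
    (((cj : ZMod e) = (ci : ZMod e) + 1 ∧ (ci : ZMod e) ≠ (cj : ZMod e) + 1 →
      betaDef e κ t αs S r * betaDef e κ t αu U r =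
        (t : K) ^ (cj - (((cj : ZMod e)).val : ℤ)) * qint (t : K) (1 + (ci - cj)))) ∧
    (((ci : ZMod e) = (cj : ZMod e) + 1 ∧ (cj : ZMod e) ≠ (ci : ZMod e) + 1 →
      betaDef e κ t αs S r * betaDef e κ t αu U r =
        (t : K) ^ (ci - (((ci : ZMod e)).val : ℤ)) * qint (t : K) (1 - (ci - cj)))) ∧
    (((ci : ZMod e) = (cj : ZMod e) →
      betaDef e κ t αs S r * betaDef e κ t αu U r =
        -((t : K) ^ (2 * (((ci : ZMod e)).val : ℤ) - 2 * cj)) /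
          (qint (t : K) (ci - cj)) ^ 2)) ∧
    ((ci : ZMod e) ≠ (cj : ZMod e) ∧ (cj : ZMod e) ≠ (ci : ZMod e) + 1 ∧
        (ci : ZMod e) ≠ (cj : ZMod e) + 1 →
      betaDef e κ t αs S r * betaDef e κ t αu U r = 1) := by
  obtain ⟨hu1, hu2⟩ := content_swap κ S U r hr1 hrn hshape hU
  have hne : ∀ δ : ℤ, -1 ≤ δ → δ ≤ 1 → ci - cj + δ ≠ 0 → qint (t : K) (ci - cj + δ) ≠ 0 := by
    intro δ h1 h2 h0
    subst hci hcj
    exact qint_content_ne hsep S r (r + 1) hr1 hrn.le (by omega) hrn δ h1 h2 h0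
  have hne' : ∀ δ : ℤ, -1 ≤ δ → δ ≤ 1 → cj - ci + δ ≠ 0 → qint (t : K) (cj - ci + δ) ≠ 0 := by
    intro δ h1 h2 h0
    subst hci hcj
    exact qint_content_ne hsep S (r + 1) r (by omega) hrn hr1 hrn.le δ h1 h2 h0
  have n1 : ci - cj ≠ 0 → qint (t : K) (ci - cj) ≠ 0 := by
    simpa using hne 0 (by omega) (by omega)
  have n2 : ci - cj ≠ -1 → qint (t : K) (1 + (ci - cj)) ≠ 0 := fun h => by
    rw [add_comm]; exact hne 1 (by omega) (by omega) (by omega)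
  have n3 : ci - cj ≠ 1 → qint (t : K) (1 - (ci - cj)) ≠ 0 := fun h => by
    rw [show 1 - (ci - cj) = cj - ci + 1 by ring]
    exact hne' 1 (by omega) (by omega) (by omega)
  have ht : (t : K) ≠ 0 := t.ne_zero
  have hneg := qint_neg (t : K) ht (ci - cj)
  have h01 : (1 : ZMod e) ≠ 0 := by
    have : Fact (1 < e) := ⟨he⟩
    exact one_ne_zero
  have r0 : ci - cj = 0 → (ci : ZMod e) = cj := fun h => by
    rw [show ci = cj by omega]
  have r1 : ci - cj = 1 → (ci : ZMod e) = cj + 1 := fun h => by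
    rw [show ci = cj + 1 by omega]; push_cast; rfl
  have r2 : ci - cj = -1 → (cj : ZMod e) = ci + 1 := fun h => by
    rw [show cj = ci + 1 by omega]; push_cast; rfl
  have hrS : rhoTab κ S r = ci - cj := by rw [rhoTab, hci, hcj]
  have hrU : rhoTab κ U r = -(ci - cj) := by rw [rhoTab, hu1, hu2, hci, hcj]; ring
  simp only [betaDef, hrS, hrU, hu1, hu2, ← hci, ← hcj, sub_neg_eq_add] at hα ⊢
  rw [← sub_eq_add_neg] at hα
  generalize hρ : ci - cj = ρ at *
  generalize hvi : ((ci : ZMod e).val : ℤ) = vi at *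
  generalize hvj : ((cj : ZMod e).val : ℤ) = vj at *
  refine ⟨?_, ?_, ?_, ?_, ?_⟩
  · rintro ⟨h1, h2⟩
    have hd : (ci : ZMod e) ≠ cj := fun h => h01 (by simpa [h] using h1)
    rw [if_neg hd, if_pos h2, if_neg hd.symm, if_pos h1]
    have q0 := n1 (fun h => hd (r0 h))
    have q0' : qint (t : K) (-ρ) ≠ 0 := qint_neg_ne _ ht _ q0
    calc _ = ((t : K) ^ (cj - vi) * (t : K) ^ (ci - vj)) * (αs * αu) *
          (qint (t : K) ρ * qint (t : K) (-ρ)) := by ring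
      _ = _ := by
        rw [hα, ← zpow_add₀ ht, show cj - vi + (ci - vj) = ci + cj - vi - vj by ring]
        field_simp
  · rintro ⟨h1, h2⟩
    have hd : (ci : ZMod e) ≠ cj := fun h => h01 (by simpa [h] using h1)
    rw [if_neg hd, if_neg h2, if_neg hd.symm, if_pos h1]
    have q0 := n1 (fun h => hd (r0 h))
    have q0' : qint (t : K) (-ρ) ≠ 0 := qint_neg_ne _ ht _ q0
    have q3 := n3 (fun h => h2 (r1 h))
    calc _ = ((t : K) ^ (-ρ) * (t : K) ^ (ci - vj)) * (αs * αu) *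
          (qint (t : K) ρ * qint (t : K) (-ρ)) / qint (t : K) (1 - ρ) := by ring
      _ = _ := by
        rw [hα, ← zpow_add₀ ht, show -ρ + (ci - vj) = cj - vj by rw [← hρ]; ring]
        field_simp
  · rintro ⟨h1, h2⟩
    have hd : (ci : ZMod e) ≠ cj := fun h => h01 (by simpa [h] using h1)
    rw [if_neg hd, if_pos h1, if_neg hd.symm, if_neg h2]
    have q0 := n1 (fun h => hd (r0 h))
    have q0' : qint (t : K) (-ρ) ≠ 0 := qint_neg_ne _ ht _ q0
    have q2 := n2 (fun h => h2 (r2 h))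
    calc _ = ((t : K) ^ (cj - vi) * (t : K) ^ (- -ρ)) * (αs * αu) *
          (qint (t : K) ρ * qint (t : K) (-ρ)) / qint (t : K) (1 + ρ) := by ring
      _ = _ := by
        rw [hα, ← zpow_add₀ ht, show cj - vi + - -ρ = ci - vi by rw [← hρ]; ring]
        field_simp
  · intro h
    rw [if_pos h, if_pos h.symm]
    have q2 := n2 (fun h' => h01 (by have := r2 h'; rw [h] at this; simpa using this))
    have q3 := n3 (fun h' => h01 (by have := r1 h'; rw [h] at this; simpa using this))
    have hv : vj = vi := by rw [← hvi, ← hvj, h]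
    subst hv
    calc _ = ((t : K) ^ (vj - ci) * (t : K) ^ (vj - cj)) * (αs * αu) /
          (qint (t : K) (1 - ρ) * qint (t : K) (1 + ρ)) := by ring
      _ = ((t : K) ^ (vj - ci) * (t : K) ^ (vj - cj)) / (qint (t : K) ρ * qint (t : K) (-ρ)) := by
        rw [hα]
        field_simp
      _ = _ := by
        rw [hneg, ← zpow_add₀ ht,
          show 2 * vj - 2 * cj = (vj - ci + (vj - cj)) + ρ by rw [← hρ]; ring,
          zpow_add₀ ht _ ρ, zpow_neg]
        have := zpow_ne_zero ρ ht
        rw [mul_neg, div_neg, neg_div]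
        congr 1
        by_cases q : qint (t : K) ρ = 0
        · simp [q]
        · field_simp
  · rintro ⟨hd, h1, h2⟩
    rw [if_neg hd, if_neg h2, if_neg hd.symm, if_neg h1]
    have q0 := n1 (fun h => hd (r0 h))
    have q0' : qint (t : K) (-ρ) ≠ 0 := qint_neg_ne _ ht _ q0
    have q2 := n2 (fun h => h1 (r2 h))
    have q3 := n3 (fun h => h2 (r1 h))
    calc _ = ((t : K) ^ (-ρ) * (t : K) ^ (- -ρ)) * (αs * αu) *
          (qint (t : K) ρ * qint (t : K) (-ρ)) /
            (qint (t : K) (1 - ρ) * qint (t : K) (1 + ρ)) := by ring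
      _ = _ := by
        rw [hα, ← zpow_add₀ ht, add_neg_cancel, zpow_zero]
        field_simp

end Paper
end

section
/- Let O be a commutative ring with a distinguished invertible element t, let 2 ≤ e < ∞, and let R_n(O) be the deformed cyclotomic quiver Hecke algebra attached to a multicharge κ ∈ Z^ℓ. Then for every 1 ≤ r ≤ n and every i ∈ I^n there exists a finite multiset X_r(i) of integers, each divisible by e, such that ∏_{c ∈ X_r(i)} (y_r − [c]_t) · f_i = 0 in R_n(O). -/
open scoped BigOperators
open scoped Classical

namespace Paper

/-! ## Auxiliary lemmas for the proof -/

theorem qintU_succ {O : Type*} [CommRing O] (t : Oˣ) (d : ℤ) :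
    qintU t (d + 1) = qintU t d + ((t ^ d : Oˣ) : O) := by
  unfold qintU
  rcases le_or_gt 0 d with h | h
  · rw [if_pos h, if_pos (by omega)]
    obtain ⟨k, rfl⟩ := Int.eq_ofNat_of_zero_le h
    have : ((k : ℤ) + 1).toNat = k + 1 := by omega
    rw [this, Finset.sum_range_succ]
    simp
  · rw [if_neg (by omega : ¬ 0 ≤ d)]
    obtain ⟨k, rfl⟩ : ∃ k : ℕ, d = -((k : ℤ) + 1) := ⟨(-d - 1).toNat, by omega⟩
    have h1 : (-(-((k : ℤ) + 1))).toNat = k + 1 := by omega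
    rw [h1, Finset.sum_range_succ]
    rcases Nat.eq_zero_or_pos k with rfl | hk
    · simp
    · rw [if_neg (by omega)]
      have h2 : (-(-((k : ℤ) + 1) + 1)).toNat = k := by omega
      rw [h2]
      ring

theorem qintU_zero {O : Type*} [CommRing O] (t : Oˣ) : qintU t 0 = 0 := by
  simp [qintU]

theorem qintU_add {O : Type*} [CommRing O] (t : Oˣ) (c d : ℤ) :
    qintU t (c + d) = ((t ^ d : Oˣ) : O) * qintU t c + qintU t d := by
  have key : ∀ c : ℤ, ((t ^ d : Oˣ) : O) * ((t ^ c : Oˣ) : O) = ((t ^ (c + d) : Oˣ) : O) := by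
    intro c
    rw [← Units.val_mul, ← zpow_add, add_comm]
  induction c using Int.induction_on with
  | zero => simp [qintU_zero]
  | succ k ih =>
    have h : (k : ℤ) + 1 + d = (k + d) + 1 := by ring
    rw [h, qintU_succ, ih, qintU_succ, mul_add, key]
    ring
  | pred k ih =>
    have h : -(k : ℤ) + d = (-(k : ℤ) - 1 + d) + 1 := by ring
    have h' : -(k : ℤ) = (-(k : ℤ) - 1) + 1 := by ring
    rw [h, qintU_succ] at ih
    nth_rewrite 3 [h'] at ih
    rw [qintU_succ, mul_add, key] at ih
    linear_combination ih

/-- The product `∏_{c ∈ X} (y - [c]_t)`. -/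
noncomputable def yprod {R : Type*} [CommRing R] (t : Rˣ) {A : Type*} [Ring A] [Algebra R A]
    (X : List ℤ) (y : A) : A :=
  (X.map fun c => y - algebraMap R A (qintU t c)).prod

section
variable {R : Type*} [CommRing R] (t : Rˣ) {A : Type*} [Ring A] [Algebra R A]

theorem yprod_cons (c : ℤ) (X : List ℤ) (y : A) :
    yprod t (c :: X) y = (y - algebraMap R A (qintU t c)) * yprod t X y := by
  simp [yprod]

theorem yprod_append (X Y : List ℤ) (y : A) :
    yprod t (X ++ Y) y = yprod t X y * yprod t Y y := by
  simp [yprod]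

theorem yprod_inter (X : List ℤ) {p q s : A} (h : p * s = s * q) :
    yprod t X p * s = s * yprod t X q := by
  induction X with
  | nil => simp [yprod]
  | cons c X ih =>
    rw [yprod_cons, yprod_cons, mul_assoc, ih, ← mul_assoc, ← mul_assoc]
    congr 1
    rw [sub_mul, mul_sub, h, Algebra.commutes]

/-- The element `y^⟨d⟩ = t^d y + [d]_t`. -/
noncomputable def ysh (d : ℤ) (y : A) : A :=
  algebraMap R A ((t ^ d : Rˣ) : R) * y + algebraMap R A (qintU t d)

theorem ysh_commute (d : ℤ) {p q : A} (h : Commute p q) : Commute (ysh t d p) q :=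
  ((Algebra.commute_algebraMap_left _ _).mul_left h).add_left
    (Algebra.commute_algebraMap_left _ _)

theorem ysh_sub (c d : ℤ) (q : A) :
    ysh t d q - algebraMap R A (qintU t (c + d)) =
      algebraMap R A ((t ^ d : Rˣ) : R) * (q - algebraMap R A (qintU t c)) := by
  rw [qintU_add, ysh, map_add, map_mul, mul_sub]
  abel

theorem yprod_commute (X : List ℤ) {p q : A} (h : Commute p q) : Commute (yprod t X p) q :=
  yprod_inter t X h

/-- Transport of the polynomial relation along `p = q^⟨d⟩` on `m`. -/
theorem yprod_shift (X : List ℤ) (d : ℤ) {p q : A} (hpq : Commute p q) :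
    ∀ m : A, (ysh t d q - p) * m = 0 → yprod t X q * m = 0 →
      yprod t (X.map (· + d)) p * m = 0 := by
  induction X with
  | nil => intro m _ hm; simpa [yprod] using hm
  | cons c X ih =>
    intro m h hm
    have hc : Commute (ysh t d q - p) (q - algebraMap R A (qintU t c)) :=
      ((ysh_commute t d (Commute.refl q)).sub_left hpq).sub_right
        (Algebra.commute_algebraMap_right _ _)
    have hX : Commute (yprod t X q) (q - algebraMap R A (qintU t c)) :=
      yprod_commute t X ((Commute.refl q).sub_right (Algebra.commute_algebraMap_right _ _))
    have hX' : Commute (yprod t (X.map (· + d)) p) (p - algebraMap R A (qintU t (c + d))) :=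
      yprod_commute t _ ((Commute.refl p).sub_right (Algebra.commute_algebraMap_right _ _))
    have h1 := ih ((q - algebraMap R A (qintU t c)) * m)
      (by rw [← mul_assoc, hc.eq, mul_assoc, h, mul_zero])
      (by rw [← mul_assoc, hX.eq, ← yprod_cons, hm])
    have hp : p * m = ysh t d q * m := by
      rw [sub_mul, sub_eq_zero] at h
      exact h.symm
    have h2 : (p - algebraMap R A (qintU t (c + d))) * m =
        algebraMap R A ((t ^ d : Rˣ) : R) * ((q - algebraMap R A (qintU t c)) * m) := by
      rw [← mul_assoc, ← ysh_sub, sub_mul, sub_mul, hp]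
    rw [List.map_cons, yprod_cons, ← hX'.eq, mul_assoc, h2, ← mul_assoc,
      ← (Algebra.commute_algebraMap_left _ _).eq, mul_assoc, h1, mul_zero]

theorem ysh_inv (d : ℤ) (p q : A) :
    ysh t (-d) q - p = - (algebraMap R A ((t ^ (-d) : Rˣ) : R) * (ysh t d p - q)) := by
  have h1 : algebraMap R A ((t ^ (-d) : Rˣ) : R) * algebraMap R A ((t ^ d : Rˣ) : R) = 1 := by
    rw [← map_mul, ← Units.val_mul, ← zpow_add]
    simp
  have h2 : algebraMap R A (qintU t (-d)) =
      - (algebraMap R A ((t ^ (-d) : Rˣ) : R) * algebraMap R A (qintU t d)) := by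
    have := qintU_add t d (-d)
    rw [add_neg_cancel, qintU_zero] at this
    rw [← map_mul, ← map_neg]
    congr 1
    linear_combination -this
  rw [ysh, ysh, h2, mul_sub, mul_add, ← mul_assoc, h1]
  noncomm_ring

/-- Transport of the polynomial relation along `q = p^⟨d⟩` on `m`. -/
theorem yprod_shift' (X : List ℤ) (d : ℤ) {p q : A} (hpq : Commute p q)
    (m : A) (h : (ysh t d p - q) * m = 0) (hm : yprod t X q * m = 0) :
    yprod t (X.map (· + -d)) p * m = 0 := by
  apply yprod_shift t X (-d) hpq m _ hm
  rw [ysh_inv, neg_mul, mul_assoc, h, mul_zero, neg_zero]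

/-- The step for equal residues. -/
theorem yprod_eq_step (X : List ℤ) {p q s f : A} (hpq : Commute p q) (hqf : Commute q f)
    (hff : f * f = f) (hsf : s * f = f * s) (h1 : p * s * f = (s * q + 1) * f)
    (h2 : s ^ 2 * f = 0) (hX : yprod t X q * f = 0) : yprod t X p * f = 0 := by
  have hθ : p * ((p - q) * s * f - f) = ((p - q) * s * f - f) * q := by
    have e1 : p * ((p - q) * s * f) = (p - q) * (p * s * f) := by
      have : p * (p - q) = (p - q) * p := ((Commute.refl p).sub_right hpq).eq
      rw [mul_assoc, ← mul_assoc, this]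
      simp only [mul_assoc]
    have e2 : ((p - q) * s * f - f) * q = (p - q) * s * (q * f) - q * f := by
      rw [sub_mul, mul_assoc _ f q, ← hqf.eq]
    rw [mul_sub, e1, h1, e2]
    noncomm_ring
  have h3 := yprod_inter t X hθ
  have h4 : ((p - q) * s * f - f) * yprod t X q = 0 := by
    have : f * yprod t X q = 0 := by rw [← (yprod_commute t X hqf).eq, hX]
    rw [sub_mul, mul_assoc, this, mul_zero, sub_zero]
  rw [h4, mul_sub, sub_eq_zero] at h3
  have h5 : yprod t X p * (p - q) = (p - q) * yprod t X p :=
    (yprod_commute t X ((Commute.refl p).sub_right hpq)).eq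
  have h6 : yprod t X p * f * s = 0 := by
    rw [← h3]
    have : (p - q) * s * f * s = (p - q) * (s ^ 2 * f) := by
      rw [mul_assoc _ f s, ← hsf, pow_two]
      simp only [mul_assoc]
    rw [mul_assoc, this, h2, mul_zero, mul_zero]
  rw [← h3, mul_assoc (p - q), ← mul_assoc, h5, hsf, mul_assoc, ← mul_assoc (yprod t X p), h6,
    mul_zero]

/-- The common part of the step for different residues. -/
theorem yprod_ne_step (Y : List ℤ) {p q s f g : A} (hpf : Commute p f)
    (hff : f * f = f) (hsf : s * f = g * s) (h1 : s * p * f = q * s * f)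
    (hY : yprod t Y q * g = 0) : s ^ 2 * f * yprod t Y p = 0 := by
  have h : q * (s * f) = (s * f) * p := by
    rw [mul_assoc s, ← hpf.eq, ← mul_assoc, ← mul_assoc, h1]
  have h2 := yprod_inter t Y h
  rw [pow_two, mul_assoc s s f, mul_assoc, ← h2, hsf, ← mul_assoc (yprod t Y q), hY]
  simp

end

section
variable (R : Type) [CommRing R] (t : Rˣ) (n e ℓ : ℕ) [NeZero e] (κ : ℕ → ℤ)

theorem Drel {a b : FreeAlgebra R (KLRGen n e)} (h : DefKLRRel R t n e ℓ κ a b) :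
    RingQuot.mkAlgHom R (DefKLRRel R t n e ℓ κ) a = RingQuot.mkAlgHom R (DefKLRRel R t n e ℓ κ) b :=
  RingQuot.mkAlgHom_rel R h

theorem mk_ydot (d : ℤ) (k : Fin n) :
    RingQuot.mkAlgHom R (DefKLRRel R t n e ℓ κ) (ydot R t d k) =
      ysh t d (DyGen R t n e ℓ κ k) := by
  simp [ydot, ysh, DyGen]

theorem y_base (h : 0 < n) (i : Fin n → ZMod e) :
    ∃ X : List ℤ, (∀ c ∈ X, (e : ℤ) ∣ c) ∧
      yprod t X (DyGen R t n e ℓ κ ⟨0, h⟩) * DfGen R t n e ℓ κ i = 0 := by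
  have h0 := Drel R t n e ℓ κ (DefKLRRel.cyc h i)
  rw [map_mul, map_zero] at h0
  suffices H : ∀ L : List ℕ, ∃ X : List ℤ, (∀ c ∈ X, (e : ℤ) ∣ c) ∧
      yprod t X (DyGen R t n e ℓ κ ⟨0, h⟩) = RingQuot.mkAlgHom R (DefKLRRel R t n e ℓ κ)
        ((L.map fun l =>
            if ((κ l : ZMod e) = i ⟨0, h⟩) then
              kY R (⟨0, h⟩ : Fin n) -
                algebraMap R _ (qintU t (κ l - ((i ⟨0, h⟩).val : ℤ)))
            else 1).prod) by
    obtain ⟨X, hX, hX'⟩ := H (List.range ℓ)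
    exact ⟨X, hX, by rw [hX']; exact h0⟩
  intro L
  induction L with
  | nil => exact ⟨[], by simp, by simp [yprod]⟩
  | cons l L ih =>
    obtain ⟨X, hX, hX'⟩ := ih
    by_cases hl : (κ l : ZMod e) = i ⟨0, h⟩
    · refine ⟨(κ l - ((i ⟨0, h⟩).val : ℤ)) :: X, ?_, ?_⟩
      · intro c hc
        rcases List.mem_cons.1 hc with rfl | hc
        · rw [← ZMod.intCast_zmod_eq_zero_iff_dvd]
          simp [hl]
        · exact hX c hc
      · rw [yprod_cons, hX', List.map_cons, List.prod_cons, map_mul, if_pos hl]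
        congr 1
        simp [DyGen]
    · refine ⟨X, hX, ?_⟩
      rw [hX', List.map_cons, List.prod_cons, if_neg hl, one_mul]

theorem dvd_of_arrow {a b : ZMod e} (h : b = a + 1) :
    (e : ℤ) ∣ 1 + ((a.val : ℤ) - (b.val : ℤ)) := by
  rw [← ZMod.intCast_zmod_eq_zero_iff_dvd]
  simp [h]

theorem dvd_map_add {X : List ℤ} {d : ℤ} (hX : ∀ c ∈ X, (e : ℤ) ∣ c) (hd : (e : ℤ) ∣ d) :
    ∀ c ∈ X.map (· + d), (e : ℤ) ∣ c := by
  intro c hc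
  obtain ⟨a, ha, rfl⟩ := List.mem_map.1 hc
  exact dvd_add (hX a ha) hd

theorem y_step (r : Fin (n - 1))
    (ih : ∀ i : Fin n → ZMod e, ∃ X : List ℤ, (∀ c ∈ X, (e : ℤ) ∣ c) ∧
      yprod t X (DyGen R t n e ℓ κ (pL r)) * DfGen R t n e ℓ κ i = 0) (i : Fin n → ZMod e) :
    ∃ X : List ℤ, (∀ c ∈ X, (e : ℤ) ∣ c) ∧
      yprod t X (DyGen R t n e ℓ κ (pR r)) * DfGen R t n e ℓ κ i = 0 := by
  obtain ⟨X, hXe, hX⟩ := ih i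
  obtain ⟨Y, hYe, hY⟩ := ih (swapSeq i r)
  have hpq : Commute (DyGen R t n e ℓ κ (pR r)) (DyGen R t n e ℓ κ (pL r)) := by
    have := Drel R t n e ℓ κ (DefKLRRel.yy (pR r) (pL r))
    rw [map_mul, map_mul] at this
    exact this
  have hqf : Commute (DyGen R t n e ℓ κ (pL r)) (DfGen R t n e ℓ κ i) := by
    have := Drel R t n e ℓ κ (DefKLRRel.yE (pL r) i)
    rw [map_mul, map_mul] at this
    exact this
  have hpf : Commute (DyGen R t n e ℓ κ (pR r)) (DfGen R t n e ℓ κ i) := by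
    have := Drel R t n e ℓ κ (DefKLRRel.yE (pR r) i)
    rw [map_mul, map_mul] at this
    exact this
  have hff : DfGen R t n e ℓ κ i * DfGen R t n e ℓ κ i = DfGen R t n e ℓ κ i := by
    have := Drel R t n e ℓ κ (DefKLRRel.idem i)
    rw [map_mul] at this
    exact this
  have hsf : DpsiGen R t n e ℓ κ r * DfGen R t n e ℓ κ i =
      DfGen R t n e ℓ κ (swapSeq i r) * DpsiGen R t n e ℓ κ r := by
    have := Drel R t n e ℓ κ (DefKLRRel.psiE r i)
    rw [map_mul, map_mul] at this
    exact this
  by_cases hi : i (pL r) = i (pR r)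
  · have hsw : swapSeq i r = i := by
      funext k
      unfold swapSeq
      split_ifs with h1 h2
      · rw [h1, hi]
      · rw [h2, hi]
      · rfl
    rw [hsw] at hsf
    refine ⟨X, hXe, yprod_eq_step t X hpq hqf hff hsf ?_ ?_ hX⟩
    · have := Drel R t n e ℓ κ (DefKLRRel.ypsiEq r i hi)
      simp only [map_mul, map_add, map_one] at this
      exact this
    · have := Drel R t n e ℓ κ (DefKLRRel.quadEq r i hi)
      simp only [map_mul, map_pow, map_zero] at this
      exact this
  · have h1 : DpsiGen R t n e ℓ κ r * DyGen R t n e ℓ κ (pR r) * DfGen R t n e ℓ κ i =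
        DyGen R t n e ℓ κ (pL r) * DpsiGen R t n e ℓ κ r * DfGen R t n e ℓ κ i := by
      have := Drel R t n e ℓ κ (DefKLRRel.psiyNe r i hi)
      simp only [map_mul] at this
      exact this
    have key := yprod_ne_step t Y hpf hff hsf h1 hY
    -- move `f` to the right of the polynomial in `y_{r+1}`
    have hm : DfGen R t n e ℓ κ i * yprod t Y (DyGen R t n e ℓ κ (pR r)) =
        yprod t Y (DyGen R t n e ℓ κ (pR r)) * DfGen R t n e ℓ κ i :=
      (yprod_commute t Y hpf).eq.symm
    have hqm : ∀ Z : List ℤ, yprod t X (DyGen R t n e ℓ κ (pL r)) *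
        (yprod t Z (DyGen R t n e ℓ κ (pR r)) * DfGen R t n e ℓ κ i) = 0 := by
      intro Z
      have : Commute (yprod t X (DyGen R t n e ℓ κ (pL r)))
          (yprod t Z (DyGen R t n e ℓ κ (pR r))) :=
        yprod_commute t X (yprod_commute t Z hpq).symm
      rw [← mul_assoc, this.eq, mul_assoc, hX, mul_zero]
    by_cases ha : i (pR r) = i (pL r) + 1
    · have hd : (e : ℤ) ∣ 1 + rhoI i r := dvd_of_arrow e ha
      by_cases hb : i (pL r) = i (pR r) + 1
      · have hd' : (e : ℤ) ∣ -(1 - rhoI i r) := by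
          have := dvd_of_arrow e hb
          rw [dvd_neg]
          have hr : 1 - rhoI i r =
              1 + (((i (pR r)).val : ℤ) - ((i (pL r)).val : ℤ)) := by
            unfold rhoI
            ring
          rw [hr]
          exact this
        have hq := Drel R t n e ℓ κ (DefKLRRel.quadBoth r i ha hb)
        simp only [map_mul, map_pow, map_sub, mk_ydot] at hq
        change DpsiGen R t n e ℓ κ r ^ 2 * DfGen R t n e ℓ κ i =
          (ysh t (1 + rhoI i r) (DyGen R t n e ℓ κ (pL r)) - DyGen R t n e ℓ κ (pR r)) *
          (ysh t (1 - rhoI i r) (DyGen R t n e ℓ κ (pR r)) - DyGen R t n e ℓ κ (pL r)) *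
            DfGen R t n e ℓ κ i at hq
        rw [hq, mul_assoc, hm, mul_assoc] at key
        have hc : Commute (ysh t (1 - rhoI i r) (DyGen R t n e ℓ κ (pR r)) -
            DyGen R t n e ℓ κ (pL r)) (DyGen R t n e ℓ κ (pL r)) :=
          (ysh_commute t _ hpq).sub_left (Commute.refl _)
        have hc' : Commute (ysh t (1 - rhoI i r) (DyGen R t n e ℓ κ (pR r)) -
            DyGen R t n e ℓ κ (pL r)) (DyGen R t n e ℓ κ (pR r)) :=
          (ysh_commute t _ (Commute.refl _)).sub_left hpq.symm
        have s1 := yprod_shift t X (1 + rhoI i r) hpq _ key (by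
          rw [← mul_assoc, (yprod_commute t X hc.symm).eq, mul_assoc, hqm, mul_zero])
        rw [← mul_assoc, (yprod_commute t _ hc'.symm).eq, mul_assoc, ← mul_assoc (yprod t _ _),
          ← yprod_append] at s1
        have s2 := yprod_shift' t X (1 - rhoI i r) hpq _ s1 (hqm _)
        rw [← mul_assoc, ← yprod_append] at s2
        refine ⟨_, ?_, s2⟩
        intro c hc
        rcases List.mem_append.1 hc with hc | hc
        · exact dvd_map_add e hXe hd' c hc
        · rcases List.mem_append.1 hc with hc | hc
          · exact dvd_map_add e hXe hd c hc
          · exact hYe c hc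
      · have hq := Drel R t n e ℓ κ (DefKLRRel.quadR r i ha hb)
        simp only [map_mul, map_pow, map_sub, mk_ydot] at hq
        change DpsiGen R t n e ℓ κ r ^ 2 * DfGen R t n e ℓ κ i =
          (ysh t (1 + rhoI i r) (DyGen R t n e ℓ κ (pL r)) - DyGen R t n e ℓ κ (pR r)) *
            DfGen R t n e ℓ κ i at hq
        rw [hq, mul_assoc, hm] at key
        have s1 := yprod_shift t X (1 + rhoI i r) hpq _ key (hqm _)
        rw [← mul_assoc, ← yprod_append] at s1
        refine ⟨_, ?_, s1⟩
        intro c hc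
        rcases List.mem_append.1 hc with hc | hc
        · exact dvd_map_add e hXe hd c hc
        · exact hYe c hc
    · by_cases hb : i (pL r) = i (pR r) + 1
      · have hd' : (e : ℤ) ∣ -(1 - rhoI i r) := by
          have := dvd_of_arrow e hb
          rw [dvd_neg]
          have hr : 1 - rhoI i r =
              1 + (((i (pR r)).val : ℤ) - ((i (pL r)).val : ℤ)) := by
            unfold rhoI
            ring
          rw [hr]
          exact this
        have hq := Drel R t n e ℓ κ (DefKLRRel.quadL r i hb ha)
        simp only [map_mul, map_pow, map_sub, mk_ydot] at hq
        change DpsiGen R t n e ℓ κ r ^ 2 * DfGen R t n e ℓ κ i =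
          (ysh t (1 - rhoI i r) (DyGen R t n e ℓ κ (pR r)) - DyGen R t n e ℓ κ (pL r)) *
            DfGen R t n e ℓ κ i at hq
        rw [hq, mul_assoc, hm] at key
        have s1 := yprod_shift' t X (1 - rhoI i r) hpq _ key (hqm _)
        rw [← mul_assoc, ← yprod_append] at s1
        refine ⟨_, ?_, s1⟩
        intro c hc
        rcases List.mem_append.1 hc with hc | hc
        · exact dvd_map_add e hXe hd' c hc
        · exact hYe c hc
      · have hq := Drel R t n e ℓ κ (DefKLRRel.quadNone r i hi ha hb)
        simp only [map_mul, map_pow] at hq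
        change DpsiGen R t n e ℓ κ r ^ 2 * DfGen R t n e ℓ κ i = DfGen R t n e ℓ κ i at hq
        rw [hq, hm] at key
        exact ⟨Y, hYe, key⟩

theorem y_all (k : ℕ) : ∀ (hk : k < n) (i : Fin n → ZMod e),
    ∃ X : List ℤ, (∀ c ∈ X, (e : ℤ) ∣ c) ∧
      yprod t X (DyGen R t n e ℓ κ ⟨k, hk⟩) * DfGen R t n e ℓ κ i = 0 := by
  induction k with
  | zero => exact fun hk i => y_base R t n e ℓ κ hk i
  | succ k ih =>
    intro hk i
    exact y_step R t n e ℓ κ ⟨k, by omega⟩ (ih (by omega)) i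

end

/-- in the deformed cyclotomic quiver Hecke algebra `R_n(O)`, for every
`r` and `i ∈ I^n` there is a finite multiset (here: list) `X` of multiples of `e` with
`∏_{c ∈ X} (y_r - [c]_t) · f_i = 0`. -/
theorem y_nilpotent_deformed (R : Type) [CommRing R] (t : Rˣ) (n e ℓ : ℕ)
    (hℓ : 1 ≤ ℓ) (he : 2 ≤ e) [NeZero e] (κ : ℕ → ℤ) (r : Fin n) (i : Fin n → ZMod e) :
    ∃ X : List ℤ, (∀ c ∈ X, (e : ℤ) ∣ c) ∧
      ((X.map fun c => DyGen R t n e ℓ κ r - algebraMap R _ (qintU t c)).prod) *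
        DfGen R t n e ℓ κ i = 0 := by
  obtain ⟨k, hk⟩ := r
  exact y_all R t n e ℓ κ k hk i

end Paper
end
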